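/- arXiv:2006.05511 — 2 statements merged into one kernel-verified Lean document; each statement's English description precedes it below -/
import Mathlib

section
/- If G is a connected unicyclic graph of order n ≥ 3, then ξ(C_n) ≤ ξ(G) ≤ ξ(U_n). -/
open Polynomial SimpleGraph

/-- A finset of vertices is independent: pairwise nonadjacent. -/
def IsIndepFinset {V : Type*} (G : SimpleGraph V) (s : Finset V) : Prop :=
  ∀ u ∈ s, ∀ v ∈ s, ¬ G.Adj u v

open Classical in
/-- The independence polynomial of a finite graph, with real coefficients. -/
noncomputable def indepPoly {V : Type*} [Fintype V] (G : SimpleGraph V) : Polynomial ℝ :=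
  ∑ s : Finset V, if IsIndepFinset G s then (X : Polynomial ℝ) ^ s.card else 0

/-- `xi G` : the largest real root of the independence polynomial of `G`. -/
noncomputable def xi {V : Type*} [Fintype V] (G : SimpleGraph V) : ℝ :=
  sSup {x : ℝ | (indepPoly G).eval x = 0}

/-- `Pre H G` (`H ⪯ G`) : `I(H,x) ≥ I(G,x)` for all `x ∈ [ξ(G), 0]`. -/
def Pre {V W : Type*} [Fintype V] [Fintype W] (H : SimpleGraph W) (G : SimpleGraph V) : Prop :=
  ∀ x ∈ Set.Icc (xi G) 0, (indepPoly G).eval x ≤ (indepPoly H).eval x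

/-- `SPre H G` (`H ≺ G`). -/
def SPre {V W : Type*} [Fintype V] [Fintype W] (H : SimpleGraph W) (G : SimpleGraph V) : Prop :=
  Pre H G ∧ indepPoly H ≠ indepPoly G

open Classical in
/-- A graph is well-covered if all maximal independent sets have the same size. -/
def WellCovered {V : Type*} (G : SimpleGraph V) : Prop :=
  ∀ s t : Finset V,
    IsIndepFinset G s → (∀ v ∉ s, ¬ IsIndepFinset G (insert v s)) →
    IsIndepFinset G t → (∀ v ∉ t, ¬ IsIndepFinset G (insert v t)) →
    s.card = t.card

/-- A connected unicyclic graph: connected with as many edges as vertices. -/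
def Unicyclic {V : Type*} [Fintype V] (G : SimpleGraph V) : Prop :=
  G.Connected ∧ G.edgeSet.ncard = Fintype.card V

/-- The graph star (corona with `K₁`) of `G`: each vertex `inl v` gets a pendant
vertex `inr v`. -/
def corona {V : Type*} (G : SimpleGraph V) : SimpleGraph (V ⊕ V) :=
  SimpleGraph.fromRel (fun a b =>
    match a, b with
    | Sum.inl u, Sum.inl v => G.Adj u v
    | Sum.inl u, Sum.inr v => u = v
    | _, _ => False)

/-- `Ugraph n` (`U_n`, `n ≥ 3`): a triangle `0,1,2` with `n - 3` pendant vertices attached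
to vertex `0`. -/
def Ugraph (n : ℕ) : SimpleGraph (Fin n) :=
  SimpleGraph.fromRel (fun i j => i.val = 0 ∨ (i.val = 1 ∧ j.val = 2))

/-- `Dgraph n` (`D_n`, `n ≥ 4`): a path `0,1,...,n-1` plus the chord `{0,2}`, i.e. a
triangle with a path on `n - 3` vertices attached. -/
def Dgraph (n : ℕ) : SimpleGraph (Fin n) :=
  SimpleGraph.fromRel (fun i j => j.val = i.val + 1 ∨ (i.val = 0 ∧ j.val = 2))

/-- `starGraph n` (`S_n = K_{1,n-1}`): vertex `0` adjacent to all other vertices. -/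
def starGraph (n : ℕ) : SimpleGraph (Fin n) :=
  SimpleGraph.fromRel (fun i _ => i.val = 0)

/-- `Mgraph n` (`M_n`, odd `n ≥ 5`): a triangle `0,1,2` with `(n-3)/2` paths of length two
attached at vertex `0`; the middle vertices are the odd indices `3,5,...,n-2` and the leaf
attached to middle vertex `i` is `i + 1`. -/
def Mgraph (n : ℕ) : SimpleGraph (Fin n) :=
  SimpleGraph.fromRel (fun i j =>
    (i.val = 0 ∧ (j.val ≤ 2 ∨ j.val % 2 = 1)) ∨ (i.val = 1 ∧ j.val = 2) ∨
    (i.val % 2 = 1 ∧ 3 ≤ i.val ∧ j.val = i.val + 1))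

/-- `SPgraph g k ℓ` (`G(g,k,ℓ)`, for `g ∈ {3,5}` and `k + ℓ ≥ 1`): a cycle on the vertices
`0,...,g-1`, a copy of `P_k*` on the vertices `g,...,g+2k-1` (path vertices at even offsets,
each followed by its pendant vertex) joined to the cycle vertex `0` by an edge to the
path end `g`, and a copy of `P_ℓ*` on the vertices `g+2k,...,g+2k+2ℓ-1` joined to the cycle
vertex `2` by an edge to the path end `g+2k`. -/
def SPgraph (g k ℓ : ℕ) : SimpleGraph (Fin (g + 2*k + 2*ℓ)) :=
  SimpleGraph.fromRel (fun i j =>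
    (i.val < g ∧ j.val < g ∧ (j.val = i.val + 1 ∨ (i.val = 0 ∧ j.val = g - 1))) ∨
    (i.val = 0 ∧ 0 < k ∧ j.val = g) ∨
    (g ≤ i.val ∧ i.val < g + 2*k ∧ (i.val - g) % 2 = 0 ∧
      (j.val = i.val + 1 ∨ (j.val = i.val + 2 ∧ j.val < g + 2*k))) ∨
    (i.val = 2 ∧ 0 < ℓ ∧ j.val = g + 2*k) ∨
    (g + 2*k ≤ i.val ∧ (i.val - (g + 2*k)) % 2 = 0 ∧
      (j.val = i.val + 1 ∨ j.val = i.val + 2)))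

/-- `Gtree n` (`G_{2n}`, `n ≥ 5`): the tree on `2n` vertices with path `v_1 … v_n` at
indices `0,…,n-1`, `z_1` at index `n`, `y_1, y_2` at `n+1, n+2`, `x_1, x_2` at `n+3, n+4`
(with `v_3 z_1`, `v_3 y_1`, `y_1 y_2`, `v_5 x_1`, `x_1 x_2` edges), and pendant vertices
`w_j` at index `n + j - 1` attached to `v_j` for `6 ≤ j ≤ n`. -/
def Gtree (n : ℕ) : SimpleGraph (Fin (2*n)) :=
  SimpleGraph.fromRel (fun a b =>
    (a.val + 1 = b.val ∧ b.val < n) ∨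
    (a.val = 2 ∧ (b.val = n ∨ b.val = n + 1)) ∨
    (a.val = n + 1 ∧ b.val = n + 2) ∨
    (a.val = 4 ∧ b.val = n + 3) ∨
    (a.val = n + 3 ∧ b.val = n + 4) ∨
    (5 ≤ a.val ∧ a.val < n ∧ b.val = n + a.val))

/-!
Let `I(S)` be the value at `-y` of the independence polynomial of the subgraph of `G` induced by
`S`. Expanding at a vertex gives `I(S) = I(S - v) - y * I(S - N[v])`, so `I` decreases in `S` as
long as no value is negative, and `-ξ(G)` is the least `y` at which some value `I(S)` is
nonpositive.

Upper bound. Let `y = -ξ(G)`. Deleting vertices of degree at most one, and finally a vertex of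
degree two that destroys the cycle, shows that `I(G)` is at least `(1 - y)^(n-3) * (1 - 2y) - y`.
This is the value for `U_n`, which is therefore nonpositive at `y`.

Lower bound. Let `-y = ξ(C_n)` and suppose that all values `I(S)` are positive. If every component
of a `k`-element `S` meets `A`, then `I(S) / I(S - A)` is at most the ratio of the paths `P_k` and
`P_{k-1}`, the case where `A` is an end of a path. Expand `I(G)` at the two ends `u`, `v` of an
edge of a cycle and sort the components of `G - u - v` by whether they are adjacent to `u`, to `v`
or to both. Convexity of the sequence of path ratios shows that `C_n` is the extremal case, so
`I(G) ≤ 0`, a contradiction.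
-/

open scoped Finset

/-! ### The independence polynomial on sets of vertices -/

open Classical in
/-- `indepSum G y S` is the value at `-y` of the independence polynomial of the subgraph of `G`
induced by `S`. It is a sum over the independent subsets of `S`, so that no subtype of vertices
occurs, and the sign makes the largest root correspond to the least `y` with value `0`. -/
noncomputable def indepSum {V : Type*} (G : SimpleGraph V) (y : ℝ) (S : Finset V) : ℝ :=
  ∑ T ∈ S.powerset with IsIndepFinset G T, (-y) ^ #T

section IndepSum

variable {V : Type*} {G : SimpleGraph V} {y : ℝ} {S T : Finset V} {v w : V}

theorem isIndepFinset_empty : IsIndepFinset G ∅ := by simp [IsIndepFinset]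

theorem IsIndepFinset.mono (hT : IsIndepFinset G T) (hST : S ⊆ T) : IsIndepFinset G S :=
  fun a ha b hb => hT a (hST ha) b (hST hb)

theorem isIndepFinset_insert [DecidableEq V] :
    IsIndepFinset G (insert v S) ↔ IsIndepFinset G S ∧ ∀ w ∈ S, ¬ G.Adj v w := by
  simp only [IsIndepFinset, Finset.forall_mem_insert, G.irrefl, not_false_eq_true, true_and,
    forall_and, G.adj_comm _ v]
  tauto

theorem eval_indepPoly [Fintype V] (x : ℝ) :
    (indepPoly G).eval x = indepSum G (-x) Finset.univ := by
  simp [indepPoly, indepSum, eval_finsetSum, apply_ite (eval x), Finset.sum_filter]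

theorem indepSum_insert [DecidableEq V] [DecidableRel G.Adj] (hv : v ∉ S) :
    indepSum G y (insert v S) = indepSum G y S - y * indepSum G y {w ∈ S | ¬ G.Adj v w} := by
  classical
  have hfilter : {T ∈ S.powerset | IsIndepFinset G (insert v T)} =
      {T ∈ Finset.powerset {w ∈ S | ¬ G.Adj v w} | IsIndepFinset G T} := by
    ext T
    simp only [Finset.mem_filter, Finset.mem_powerset, isIndepFinset_insert, Finset.subset_iff,
      forall_and]
    tauto
  have hcard : ∀ T ∈ S.powerset, #(insert v T) = #T + 1 := fun T hT =>
    Finset.card_insert_of_notMem fun h => hv (Finset.mem_powerset.1 hT h)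
  have hnew : (∑ T ∈ S.powerset, if IsIndepFinset G (insert v T) then (-y) ^ #(insert v T) else 0) =
      -y * indepSum G y {w ∈ S | ¬ G.Adj v w} := by
    rw [indepSum, ← hfilter, Finset.sum_filter, Finset.mul_sum]
    refine Finset.sum_congr rfl fun T hT => ?_
    rw [hcard T hT, mul_ite, mul_zero, pow_succ']
  simp only [indepSum, Finset.sum_filter] at hnew ⊢
  rw [Finset.sum_powerset_insert hv, hnew]
  ring

theorem indepSum_eq_erase_sub [DecidableEq V] [DecidableRel G.Adj] (hv : v ∈ S) :
    indepSum G y S = indepSum G y (S.erase v) - y * indepSum G y {w ∈ S.erase v | ¬ G.Adj v w} := by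
  rw [← indepSum_insert (Finset.notMem_erase v S), Finset.insert_erase hv]

theorem indepSum_of_isIndepFinset (hS : IsIndepFinset G S) : indepSum G y S = (1 - y) ^ #S := by
  classical
  induction S using Finset.induction_on with
  | empty => simp [indepSum, Finset.filter_true_of_mem, isIndepFinset_empty]
  | insert v S hv ih =>
    obtain ⟨hS, hvS⟩ := isIndepFinset_insert.1 hS
    rw [indepSum_insert hv, Finset.filter_true_of_mem hvS, ih hS, Finset.card_insert_of_notMem hv]
    ring

theorem indepSum_empty : indepSum G y ∅ = 1 := by
  rw [indepSum_of_isIndepFinset isIndepFinset_empty, Finset.card_empty, pow_zero]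

theorem indepSum_singleton : indepSum G y {v} = 1 - y := by
  rw [indepSum_of_isIndepFinset (by simp [IsIndepFinset]), Finset.card_singleton, pow_one]

theorem continuous_indepSum (G : SimpleGraph V) (S : Finset V) :
    Continuous fun y => indepSum G y S := by
  unfold indepSum
  fun_prop

theorem indepSum_nonneg_of_forall_lt_pos (h : ∀ z < y, 0 < indepSum G z S) :
    0 ≤ indepSum G y S := by
  have hclosed : IsClosed {z | 0 ≤ indepSum G z S} :=
    isClosed_le continuous_const (continuous_indepSum G S)
  have hsub : closure (Set.Iio y) ⊆ {z | 0 ≤ indepSum G z S} :=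
    closure_minimal (fun z hz => (h z hz).le) hclosed
  exact hsub (by simp)

theorem one_le_indepSum_of_nonpos (hy : y ≤ 0) : 1 ≤ indepSum G y S := by
  classical
  have hempty : ∅ ∈ {T ∈ S.powerset | IsIndepFinset G T} :=
    Finset.mem_filter.2 ⟨Finset.empty_mem_powerset S, isIndepFinset_empty⟩
  simpa [indepSum] using Finset.single_le_sum (f := fun T => (-y) ^ #T)
    (fun T _ => pow_nonneg (neg_nonneg.2 hy) _) hempty

theorem indepSum_union [DecidableEq V] (hd : Disjoint S T)
    (hST : ∀ a ∈ S, ∀ b ∈ T, ¬ G.Adj a b) :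
    indepSum G y (S ∪ T) = indepSum G y S * indepSum G y T := by
  classical
  induction S using Finset.strongInduction with
  | H S ih =>
    rcases S.eq_empty_or_nonempty with rfl | ⟨v, hv⟩
    · simp [indepSum_empty]
    have hunion : ∀ S' ⊂ S, indepSum G y (S' ∪ T) = indepSum G y S' * indepSum G y T :=
      fun S' hS' => ih S' hS' (hd.mono_left hS'.1) fun a ha => hST a (hS'.1 ha)
    have herase : S.erase v ⊂ S := Finset.erase_ssubset hv
    rw [indepSum_eq_erase_sub (Finset.mem_union_left T hv), Finset.erase_union_distrib,
      Finset.erase_eq_of_notMem (Finset.disjoint_left.1 hd hv), Finset.filter_union,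
      Finset.filter_true_of_mem (hST v hv), hunion _ herase,
      hunion _ ((Finset.filter_subset _ _).trans_ssubset herase), indepSum_eq_erase_sub hv]
    ring

end IndepSum

section Nonneg

variable {V : Type*} {G : SimpleGraph V} {y : ℝ} {S T : Finset V}

theorem indepSum_antitone (hy : 0 ≤ y) (hF : ∀ S, 0 ≤ indepSum G y S) :
    Antitone (indepSum G y) := by
  classical
  refine Finset.antitone_iff_forall_insert_le.2 fun S v hv => ?_
  rw [indepSum_insert hv]
  exact sub_le_self _ (mul_nonneg hy (hF _))

theorem indepSum_le_pow_mul (hy : 0 ≤ y) (hF : ∀ S, 0 ≤ indepSum G y S) (hST : S ⊆ T) {k : ℕ}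
    (hk : k + #S ≤ #T) : indepSum G y T ≤ (1 - y) ^ k * indepSum G y S := by
  classical
  induction k generalizing T with
  | zero => simpa using indepSum_antitone hy hF hST
  | succ k ih =>
    obtain ⟨v, hvT, hvS⟩ := Finset.exists_mem_notMem_of_card_lt_card (show #S < #T by omega)
    have hone : 0 ≤ 1 - y := indepSum_singleton (G := G) (v := v) ▸ hF {v}
    have hle : indepSum G y (T.erase v) ≤ (1 - y) ^ k * indepSum G y S :=
      ih (Finset.subset_erase.2 ⟨hST, hvS⟩) (by rw [Finset.card_erase_of_mem hvT]; omega)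
    calc indepSum G y T
        = indepSum G y (T.erase v) - y * indepSum G y {w ∈ T.erase v | ¬ G.Adj v w} :=
          indepSum_eq_erase_sub hvT
      _ ≤ indepSum G y (T.erase v) - y * indepSum G y (T.erase v) := by
          gcongr
          exact indepSum_antitone hy hF (Finset.filter_subset _ _)
      _ = (1 - y) * indepSum G y (T.erase v) := by ring
      _ ≤ (1 - y) * ((1 - y) ^ k * indepSum G y S) := by gcongr
      _ = (1 - y) ^ (k + 1) * indepSum G y S := by ring

theorem indepSum_le_pow (hy : 0 ≤ y) (hF : ∀ S, 0 ≤ indepSum G y S) {k : ℕ} (hk : k ≤ #S) :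
    indepSum G y S ≤ (1 - y) ^ k := by
  simpa [indepSum_empty] using indepSum_le_pow_mul hy hF (Finset.empty_subset S) (k := k) (by simpa)

theorem indepSum_le_of_adj (hy : 0 ≤ y) (hF : ∀ S, 0 ≤ indepSum G y S) {a b : V} (ha : a ∈ S)
    (hb : b ∈ S) (hab : G.Adj a b) {k : ℕ} (hk : k + 2 ≤ #S) :
    indepSum G y S ≤ (1 - y) ^ k * (1 - 2 * y) := by
  classical
  have hpair : indepSum G y {a, b} = 1 - 2 * y := by
    rw [indepSum_insert (by simpa using hab.ne), Finset.filter_singleton, if_neg (not_not.2 hab),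
      indepSum_empty, indepSum_singleton]
    ring
  rw [← hpair]
  exact indepSum_le_pow_mul hy hF (Finset.insert_subset ha (Finset.singleton_subset_iff.2 hb))
    (by rwa [Finset.card_pair hab.ne])

theorem indepSum_pos_of_ne_univ [Fintype V] (hG : G.Connected) (hy : 0 < y)
    (hF : ∀ S, 0 ≤ indepSum G y S) (hS : S ≠ Finset.univ) : 0 < indepSum G y S := by
  classical
  induction S using Finset.strongInduction with
  | H S ih =>
    rcases S.eq_empty_or_nonempty with rfl | ⟨u, hu⟩
    · simp [indepSum_empty]
    obtain ⟨v, -, hv⟩ := Finset.exists_of_ssubset (Finset.ssubset_univ_iff.2 hS)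
    obtain ⟨p⟩ := hG.preconnected u v
    obtain ⟨d, -, hdS, hdS'⟩ := p.exists_boundary_dart (S : Set V) hu hv
    have hssub : {w ∈ S | ¬ G.Adj d.snd w} ⊂ S :=
      Finset.filter_ssubset.2 ⟨d.fst, hdS, not_not.2 d.adj.symm⟩
    have hpos : 0 < indepSum G y {w ∈ S | ¬ G.Adj d.snd w} :=
      ih _ hssub fun h => hS (Finset.univ_subset_iff.1 (h ▸ hssub.1))
    have hinsert : 0 ≤ indepSum G y (insert d.snd S) := hF _
    rw [indepSum_insert hdS'] at hinsert
    exact (mul_pos hy hpos).trans_le (sub_nonneg.1 hinsert)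

end Nonneg

/-! ### The largest root -/

theorem exists_isLeast_indepSum_nonpos {V : Type*} [Finite V] [Nonempty V]
    (G : SimpleGraph V) : ∃ y, IsLeast {y | ∃ S, indepSum G y S ≤ 0} y := by
  obtain ⟨v⟩ := ‹Nonempty V›
  have hclosed : IsClosed {y | ∃ S, indepSum G y S ≤ 0} := by
    simp only [Set.ofPred_exists]
    exact isClosed_iUnion_of_finite fun S =>
      isClosed_le (continuous_indepSum G S) continuous_const
  refine ⟨_, hclosed.isLeast_csInf ⟨1, {v}, by simp [indepSum_singleton]⟩ ⟨0, ?_⟩⟩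
  rintro y ⟨S, hS⟩
  by_contra! hy
  linarith [one_le_indepSum_of_nonpos (G := G) (S := S) hy.le]

section LargestRoot

variable {V : Type*} [Fintype V] {G : SimpleGraph V} {y : ℝ} {S : Finset V}

-- At the least parameter all values are nonnegative, so they decrease with the vertex set and
-- the nonpositive one forces the value at `univ` to be nonpositive.
theorem indepSum_univ_eq_zero_of_isLeast (h : IsLeast {y | ∃ S, indepSum G y S ≤ 0} y) :
    indepSum G y Finset.univ = 0 := by
  obtain ⟨⟨S, hS⟩, hleast⟩ := h
  have hF : ∀ S, 0 ≤ indepSum G y S := fun S => indepSum_nonneg_of_forall_lt_pos fun z hz =>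
    not_le.1 fun hS => hz.not_ge (hleast ⟨S, hS⟩)
  have hy : 0 ≤ y := by
    by_contra! hy
    linarith [one_le_indepSum_of_nonpos (G := G) (S := S) hy.le]
  exact le_antisymm ((indepSum_antitone hy hF (Finset.subset_univ S)).trans hS) (hF _)

variable [Nonempty V]

theorem isLeast_neg_xi (G : SimpleGraph V) :
    IsLeast {y | ∃ S, indepSum G y S ≤ 0} (-xi G) := by
  obtain ⟨y, hy⟩ := exists_isLeast_indepSum_nonpos G
  have hxi : IsGreatest {x | (indepPoly G).eval x = 0} (-y) := by
    simp only [eval_indepPoly]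
    exact ⟨by simpa using indepSum_univ_eq_zero_of_isLeast hy,
      fun x hx => le_neg.1 (hy.2 ⟨Finset.univ, hx.le⟩)⟩
  rwa [xi, hxi.csSup_eq, neg_neg]

theorem indepSum_neg_xi_univ (G : SimpleGraph V) : indepSum G (-xi G) Finset.univ = 0 :=
  indepSum_univ_eq_zero_of_isLeast (isLeast_neg_xi G)

theorem neg_le_xi (h : indepSum G y S ≤ 0) : -y ≤ xi G :=
  neg_le.1 ((isLeast_neg_xi G).2 ⟨S, h⟩)

theorem indepSum_pos (hy : y < -xi G) (S : Finset V) : 0 < indepSum G y S := by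
  by_contra! h
  linarith [neg_le_xi h]

theorem indepSum_neg_xi_nonneg (G : SimpleGraph V) (S : Finset V) : 0 ≤ indepSum G (-xi G) S :=
  indepSum_nonneg_of_forall_lt_pos fun _ hz => indepSum_pos hz S

theorem xi_neg (G : SimpleGraph V) : xi G < 0 := by
  by_contra! h
  linarith [indepSum_neg_xi_univ G,
    one_le_indepSum_of_nonpos (G := G) (S := Finset.univ) (neg_nonpos.2 h)]

end LargestRoot

/-! ### The upper bound -/

section UpperBound

variable {V : Type*} {G : SimpleGraph V} {y : ℝ} {S C : Finset V}

theorem exists_card_neighbors_le_one [DecidableRel G.Adj] (hS : S.Nonempty)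
    (hac : (G.induce (S : Set V)).IsAcyclic) : ∃ v ∈ S, #{a ∈ S | G.Adj v a} ≤ 1 := by
  have : Nonempty (S : Set V) := hS.to_subtype
  obtain ⟨u, v, p, hp, hmax⟩ :=
    Walk.exists_isPath_forall_isPath_length_le_length (G.induce (S : Set V))
  -- A neighbour of the end `u` off the longest path `p` would extend `p`.
  have hsnd : ∀ a ∈ S, G.Adj u a → a = p.snd := by
    intro a ha h
    have hadj : (G.induce (S : Set V)).Adj u ⟨a, ha⟩ := h
    have hnot : ¬ (p.cons hadj.symm).IsPath := by grind [Walk.length_cons]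
    exact congrArg Subtype.val (hac.eq_snd_of_adj_start hp hadj (by grind [hp.cons]))
  refine ⟨u, u.2, Finset.card_le_one.2 fun a ha b hb => ?_⟩
  rw [Finset.mem_filter] at ha hb
  rw [hsnd a ha.1 ha.2, hsnd b hb.1 hb.2]

theorem three_le_card_of_not_isAcyclic [Fintype V] (hG : ¬ G.IsAcyclic) : 3 ≤ Fintype.card V := by
  by_contra! h
  refine hG (.of_card_le_two ?_)
  rw [ENat.card_eq_coe_fintype_card]
  exact_mod_cast Nat.le_of_lt_succ h

theorem exists_forall_one_lt_card_neighbors [DecidableRel G.Adj] (hG : ¬ G.IsAcyclic) :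
    ∃ C : Finset V, C.Nonempty ∧ ∀ c ∈ C, 1 < #{a ∈ C | G.Adj c a} := by
  classical
  simp only [IsAcyclic, not_forall, not_not] at hG
  obtain ⟨u, p, hp⟩ := hG
  refine ⟨p.support.toFinset, ⟨u, by simp⟩, fun c hc => ?_⟩
  have hsub : p.toSubgraph.neighborSet c ⊆ ↑{a ∈ p.support.toFinset | G.Adj c a} := by
    intro a ha
    simpa using ⟨p.mem_verts_toSubgraph.1 ha.snd_mem, ha.adj_sub⟩
  calc 1 < 2 := one_lt_two
    _ = (p.toSubgraph.neighborSet c).ncard :=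
        (hp.ncard_neighborSet_toSubgraph_eq_two (List.mem_toFinset.1 hc)).symm
    _ ≤ _ := Set.ncard_coe_finset _ ▸ Set.ncard_le_ncard hsub (Finset.finite_toSet _)

theorem exists_card_neighbors_le_of_deleteEdges [DecidableEq V] [DecidableRel G.Adj] {e : Sym2 V}
    (he : (G.deleteEdges {e}).IsAcyclic) (hS : S.Nonempty) :
    ∃ v ∈ S, #{a ∈ S | G.Adj v a} ≤ 1 ∨
      #{a ∈ S | G.Adj v a} ≤ 2 ∧ (G.induce (S.erase v : Set V)).IsAcyclic := by
  classical
  obtain ⟨v, hv, hcard⟩ := exists_card_neighbors_le_one hS (he.induce S)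
  refine ⟨v, hv, ?_⟩
  by_cases hve : v ∈ e
  · right
    obtain ⟨x, rfl⟩ := hve
    constructor
    · have hsub : {a ∈ S | G.Adj v a} ⊆
          insert x {a ∈ S | (G.deleteEdges {s(v, x)}).Adj v a} := by
        intro a
        simp only [Finset.mem_filter, Finset.mem_insert, deleteEdges_adj, Set.mem_singleton_iff,
          Sym2.congr_right]
        tauto
      exact (Finset.card_le_card hsub).trans ((Finset.card_insert_le _ _).trans (by omega))
    · refine (he.induce (S.erase v : Set V)).anti fun a b hab => ?_
      have hne : s((a : V), (b : V)) ≠ s(v, x) := by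
        rintro h
        rcases Sym2.mem_iff.1 (h ▸ Sym2.mem_mk_left v x : v ∈ s((a : V), (b : V))) with h | h
        · exact Finset.ne_of_mem_erase a.2 h.symm
        · exact Finset.ne_of_mem_erase b.2 h.symm
      exact deleteEdges_adj.2 ⟨hab, hne⟩
  · left
    have hne : ∀ a, s(v, a) ≠ e := fun a h => hve (h ▸ Sym2.mem_mk_left v a)
    simpa [deleteEdges_adj, hne] using hcard

theorem le_card_nonneighbors [DecidableEq V] [DecidableRel G.Adj] {v : V} (hv : v ∈ S) {k : ℕ}
    (hk : k + #{a ∈ S | G.Adj v a} < #S) : k ≤ #{a ∈ S.erase v | ¬ G.Adj v a} := by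
  have hsplit : #{a ∈ S.erase v | G.Adj v a} + #{a ∈ S.erase v | ¬ G.Adj v a} = #(S.erase v) :=
    Finset.card_filter_add_card_filter_not _
  have hle : #{a ∈ S.erase v | G.Adj v a} ≤ #{a ∈ S | G.Adj v a} :=
    Finset.card_le_card (Finset.filter_subset_filter _ (Finset.erase_subset v S))
  rw [Finset.card_erase_of_mem hv] at hsplit
  omega

theorem sub_le_indepSum [DecidableEq V] [DecidableRel G.Adj] (hy : 0 ≤ y)
    (hF : ∀ S, 0 ≤ indepSum G y S) {v : V} (hv : v ∈ S) {k : ℕ}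
    (hk : k + #{a ∈ S | G.Adj v a} < #S) :
    indepSum G y (S.erase v) - y * (1 - y) ^ k ≤ indepSum G y S := by
  rw [indepSum_eq_erase_sub hv]
  gcongr
  exact indepSum_le_pow hy hF (le_card_nonneighbors hv hk)

theorem le_indepSum_of_isAcyclic (hy : 0 ≤ y) (hF : ∀ S, 0 ≤ indepSum G y S)
    (hac : (G.induce (S : Set V)).IsAcyclic) {k : ℕ} (hS : #S = k + 1) :
    (1 - y) ^ k - y ≤ indepSum G y S := by
  classical
  induction k generalizing S with
  | zero =>
    obtain ⟨v, rfl⟩ := Finset.card_eq_one.1 hS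
    simp [indepSum_singleton]
  | succ k ih =>
    obtain ⟨v, hv, hcard⟩ := exists_card_neighbors_le_one (Finset.card_pos.1 (by omega)) hac
    have herase : (1 - y) ^ k - y ≤ indepSum G y (S.erase v) :=
      ih (hac.embedding (induceHomOfLE G (Finset.coe_subset.2 (Finset.erase_subset v S))))
        (by rw [Finset.card_erase_of_mem hv, hS, Nat.add_sub_cancel])
    have hsub := sub_le_indepSum hy hF hv (k := k) (by omega)
    calc (1 - y) ^ (k + 1) - y = (1 - y) ^ k - y - y * (1 - y) ^ k := by ring
      _ ≤ indepSum G y S := by linarith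

theorem exists_mem_not_adj [DecidableRel G.Adj] {w : V} {X : Finset V} (hX : 1 < #X)
    (hXS : X ⊆ S) (hw : #{a ∈ S | G.Adj w a} ≤ 1) : ∃ x ∈ X, ¬ G.Adj w x := by
  by_contra! h
  have hsub : X ⊆ {a ∈ S | G.Adj w a} := fun x hx => Finset.mem_filter.2 ⟨hXS hx, h x hx⟩
  exact absurd (Finset.card_le_card hsub) (by omega)

theorem exists_adj_not_adj_of_forall_one_lt_card_neighbors [DecidableRel G.Adj]
    (hC : C.Nonempty) (hCadj : ∀ c ∈ C, 1 < #{a ∈ C | G.Adj c a}) (hCS : C ⊆ S) {w : V}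
    (hw : #{a ∈ S | G.Adj w a} ≤ 1) :
    ∃ a ∈ C, ∃ b ∈ C, G.Adj a b ∧ ¬ G.Adj w a ∧ ¬ G.Adj w b := by
  have hC1 : 1 < #C := by
    obtain ⟨c, hc⟩ := hC
    exact (hCadj c hc).trans_le (Finset.card_filter_le _ _)
  obtain ⟨a, ha, hwa⟩ := exists_mem_not_adj hC1 hCS hw
  obtain ⟨b, hb, hwb⟩ := exists_mem_not_adj (hCadj a ha) ((Finset.filter_subset _ _).trans hCS) hw
  obtain ⟨hbC, hab⟩ := Finset.mem_filter.1 hb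
  exact ⟨a, ha, b, hbC, hab, hwa, hwb⟩

theorem le_indepSum_of_erase_isAcyclic [DecidableEq V] [DecidableRel G.Adj] (hy : 0 ≤ y)
    (hF : ∀ S, 0 ≤ indepSum G y S) {v : V} (hv : v ∈ S) (hcard : #{a ∈ S | G.Adj v a} ≤ 2)
    (hac : (G.induce (S.erase v : Set V)).IsAcyclic) {k : ℕ} (hS : #S = k + 3) :
    (1 - y) ^ k * (1 - 2 * y) - y ≤ indepSum G y S := by
  have herase : (1 - y) ^ (k + 1) - y ≤ indepSum G y (S.erase v) :=
    le_indepSum_of_isAcyclic hy hF hac (by rw [Finset.card_erase_of_mem hv, hS]; rfl)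
  have hsub := sub_le_indepSum hy hF hv (k := k) (by omega)
  calc (1 - y) ^ k * (1 - 2 * y) - y = (1 - y) ^ (k + 1) - y - y * (1 - y) ^ k := by ring
    _ ≤ indepSum G y S := by linarith

theorem le_indepSum_of_deleteEdges_isAcyclic [DecidableRel G.Adj] (hy : 0 ≤ y)
    (hF : ∀ S, 0 ≤ indepSum G y S) {e : Sym2 V} (he : (G.deleteEdges {e}).IsAcyclic)
    (hC : C.Nonempty) (hCadj : ∀ c ∈ C, 1 < #{a ∈ C | G.Adj c a}) (hCS : C ⊆ S) {k : ℕ}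
    (hS : #S = k + 3) : (1 - y) ^ k * (1 - 2 * y) - y ≤ indepSum G y S := by
  classical
  induction S using Finset.strongInduction generalizing k with
  | H S ih =>
    obtain ⟨w, hw, hleaf | ⟨hcard, hac⟩⟩ :=
      exists_card_neighbors_le_of_deleteEdges he (hC.mono hCS)
    · have hwC : w ∉ C := fun h => (hCadj w h).not_ge <|
        (Finset.card_le_card (Finset.filter_subset_filter _ hCS)).trans hleaf
      have hCw : C ⊆ S.erase w := Finset.subset_erase.2 ⟨hCS, hwC⟩
      have hC3 : 3 ≤ #C := by
        obtain ⟨c, hc⟩ := hC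
        have hlt : #{a ∈ C | G.Adj c a} < #C :=
          Finset.card_lt_card (Finset.filter_ssubset.2 ⟨c, hc, G.irrefl⟩)
        have := hCadj c hc
        omega
      have hSw : #(S.erase w) = k + 2 := by rw [Finset.card_erase_of_mem hw, hS]; rfl
      obtain ⟨k, rfl⟩ : ∃ j, k = j + 1 :=
        ⟨k - 1, by have := Finset.card_le_card hCw; omega⟩
      have herase := ih _ (Finset.erase_ssubset hw) hCw hSw
      obtain ⟨a, ha, b, hb, hab, hwa, hwb⟩ :=
        exists_adj_not_adj_of_forall_one_lt_card_neighbors hC hCadj hCS hleaf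
      have hnonadj : indepSum G y {x ∈ S.erase w | ¬ G.Adj w x} ≤ (1 - y) ^ k * (1 - 2 * y) :=
        indepSum_le_of_adj hy hF (Finset.mem_filter.2 ⟨hCw ha, hwa⟩)
          (Finset.mem_filter.2 ⟨hCw hb, hwb⟩) hab (le_card_nonneighbors hw (by omega))
      rw [indepSum_eq_erase_sub hw]
      calc (1 - y) ^ (k + 1) * (1 - 2 * y) - y
          = (1 - y) ^ k * (1 - 2 * y) - y - y * ((1 - y) ^ k * (1 - 2 * y)) := by ring
        _ ≤ _ := by gcongr
    · exact le_indepSum_of_erase_isAcyclic hy hF hw hcard hac hS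

theorem Ugraph_adj {n : ℕ} {a b : Fin n} : (Ugraph n).Adj a b ↔ a.val ≠ b.val ∧
    ((a.val = 0 ∨ a.val = 1 ∧ b.val = 2) ∨ b.val = 0 ∨ b.val = 1 ∧ a.val = 2) := by
  simp only [Ugraph, fromRel_adj, ne_eq, Fin.ext_iff]

theorem indepSum_Ugraph (m : ℕ) (y : ℝ) :
    indepSum (Ugraph (m + 3)) y Finset.univ = (1 - y) ^ m * (1 - 2 * y) - y := by
  classical
  have h0 : (Finset.univ : Finset (Fin (m + 3))) = insert 0 (Finset.Ioi 0) := by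
    ext w
    simp [eq_or_ne w 0]
  have h1 : Finset.Ioi (0 : Fin (m + 3)) = insert 1 (Finset.Ioi 1) := by
    ext w
    simp only [Finset.mem_Ioi, Finset.mem_insert, Fin.lt_def, Fin.ext_iff, Fin.val_zero,
      Fin.val_one]
    omega
  have h12 : Finset.Ioi (2 : Fin (m + 3)) ⊆ Finset.Ioi 1 :=
    Finset.Ioi_subset_Ioi (Fin.le_def.2 (by rw [Fin.val_one, Fin.val_two]; exact one_le_two))
  have hindep : IsIndepFinset (Ugraph (m + 3)) (Finset.Ioi 1) := by
    intro a ha b hb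
    simp only [Finset.mem_Ioi, Fin.lt_def, Fin.val_one] at ha hb
    rw [Ugraph_adj]
    omega
  have hnbr0 : {w ∈ Finset.Ioi (0 : Fin (m + 3)) | ¬ (Ugraph (m + 3)).Adj 0 w} = ∅ := by
    ext w
    simp only [Finset.mem_filter, Finset.mem_Ioi, Fin.lt_def, Fin.val_zero, Ugraph_adj,
      Finset.notMem_empty]
    grind
  have hnbr1 :
      {w ∈ Finset.Ioi (1 : Fin (m + 3)) | ¬ (Ugraph (m + 3)).Adj 1 w} = Finset.Ioi 2 := by
    ext w
    simp only [Finset.mem_filter, Finset.mem_Ioi, Fin.lt_def, Fin.val_one, Fin.val_two, Ugraph_adj]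
    grind
  rw [h0, indepSum_insert (by simp), hnbr0, indepSum_empty, h1, indepSum_insert (by simp), hnbr1,
    indepSum_of_isIndepFinset hindep, indepSum_of_isIndepFinset (hindep.mono h12), Fin.card_Ioi,
    Fin.card_Ioi, Fin.val_one, Fin.val_two, show m + 3 - 1 - 1 = m + 1 by omega,
    show m + 3 - 1 - 2 = m by omega]
  ring

theorem xi_le_xi_Ugraph [Fintype V] (hG : ¬ G.IsAcyclic) {e : Sym2 V}
    (he : (G.deleteEdges {e}).IsAcyclic) : xi G ≤ xi (Ugraph (Fintype.card V)) := by
  classical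
  obtain ⟨C, hC, hCadj⟩ := exists_forall_one_lt_card_neighbors hG
  have : Nonempty V := ⟨hC.choose⟩
  obtain ⟨m, hm⟩ : ∃ m, Fintype.card V = m + 3 :=
    Nat.exists_eq_add_of_le' (three_le_card_of_not_isAcyclic hG)
  have hle := le_indepSum_of_deleteEdges_isAcyclic (neg_pos.2 (xi_neg G)).le
    (indepSum_neg_xi_nonneg G) he hC hCadj (Finset.subset_univ C) (by rw [Finset.card_univ, hm])
  rw [indepSum_neg_xi_univ, ← indepSum_Ugraph] at hle
  rw [hm]
  simpa using neg_le_xi hle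

end UpperBound

/-! ### Ratios of paths -/

/-- `pathRatio y k` is the quotient `I(P_k, -y) / I(P_{k-1}, -y)` of the values of consecutive
paths, where `P_{-1}` has value `1`. It is meaningful as long as no earlier ratio vanishes. -/
noncomputable def pathRatio (y : ℝ) : ℕ → ℝ
  | 0 => 1
  | k + 1 => 1 - y / pathRatio y k

/-- The path ratios at `y` are those at the root `-y = ξ(C_{m + 3})`: they are positive up to
the path on `m + 2` vertices, for which the ratio is `1 / 2`. -/
structure IsCycleCritical (m : ℕ) (y : ℝ) : Prop where
  pos : 0 < y
  pathRatio_pos : ∀ k ≤ m + 2, 0 < pathRatio y k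
  pathRatio_last : pathRatio y (m + 2) = 1 / 2

theorem pathRatio_succ_mul {y : ℝ} {k : ℕ} (hk : pathRatio y k ≠ 0) :
    pathRatio y (k + 1) * pathRatio y k = pathRatio y k - y := by
  rw [pathRatio, sub_mul, one_mul, div_mul_cancel₀ _ hk]

theorem pathRatio_one {y : ℝ} : pathRatio y 1 = 1 - y := by simp [pathRatio]

namespace IsCycleCritical

variable {m : ℕ} {y : ℝ}

theorem pathRatio_succ_le (h : IsCycleCritical m y) {k : ℕ} (hk : k + 1 ≤ m + 2) :
    pathRatio y (k + 1) ≤ pathRatio y k := by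
  induction k with
  | zero => simpa [pathRatio] using h.pos.le
  | succ k ih =>
    exact sub_le_sub_left (div_le_div_of_nonneg_left h.pos.le (h.pathRatio_pos _ (by lia))
      (ih (by lia))) 1

theorem pathRatio_le_of_le (h : IsCycleCritical m y) {k l : ℕ} (hkl : k ≤ l) (hl : l ≤ m + 2) :
    pathRatio y l ≤ pathRatio y k := by
  induction l, hkl using Nat.le_induction with
  | base => exact le_rfl
  | succ l _ ih => exact (h.pathRatio_succ_le hl).trans (ih (by lia))

theorem pathRatio_le_one (h : IsCycleCritical m y) {k : ℕ} (hk : k ≤ m + 2) : pathRatio y k ≤ 1 :=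
  h.pathRatio_le_of_le k.zero_le hk

theorem half_le_pathRatio (h : IsCycleCritical m y) {k : ℕ} (hk : k ≤ m + 2) :
    1 / 2 ≤ pathRatio y k :=
  h.pathRatio_last ▸ h.pathRatio_le_of_le hk le_rfl

theorem pathRatio_penultimate (h : IsCycleCritical m y) : pathRatio y (m + 1) = 2 * y := by
  have hmul := pathRatio_succ_mul (h.pathRatio_pos (m + 1) (by lia)).ne'
  rw [h.pathRatio_last] at hmul
  linarith

theorem pathRatio_mul_le (h : IsCycleCritical m y) {k l : ℕ} (hkl : k + l ≤ m + 2) :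
    pathRatio y k * pathRatio y l ≤ pathRatio y (k + l) := by
  induction l with
  | zero => simp [pathRatio]
  | succ l ih =>
    set C := pathRatio y k
    set D := pathRatio y (l + 1)
    have hC : 0 < C := h.pathRatio_pos k (by lia)
    have hC1 : C ≤ 1 := h.pathRatio_le_one (by lia)
    have hl : 0 < pathRatio y l := h.pathRatio_pos l (by lia)
    have hD : 1 / 2 ≤ D := h.half_le_pathRatio (by lia)
    rcases le_total (C * D) (1 / 2) with hCD | hCD
    · exact hCD.trans (h.half_le_pathRatio hkl)
    have hy : y = (1 - D) * pathRatio y l := by linarith [pathRatio_succ_mul hl.ne']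
    calc C * D ≤ 1 - (1 - D) / C := by
          have hfactor : 1 - (1 - D) / C - C * D = (1 - C) * (C * D + D - 1) / C := by
            field_simp
            ring
          have : 0 ≤ (1 - C) * (C * D + D - 1) / C :=
            div_nonneg (mul_nonneg (by linarith) (by linarith)) hC.le
          linarith
      _ = 1 - y / (C * pathRatio y l) := by
          rw [← mul_div_mul_right (1 - D) C hl.ne', ← hy]
      _ ≤ 1 - y / pathRatio y (k + l) :=
          sub_le_sub_left (div_le_div_of_nonneg_left h.pos.le (mul_pos hC hl) (ih (by lia))) 1

theorem pathRatio_succ_sub_succ_le (h : IsCycleCritical m y) {k : ℕ} (hk : k + 2 ≤ m + 2) :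
    pathRatio y (k + 1) - pathRatio y (k + 2) ≤ pathRatio y k - pathRatio y (k + 1) := by
  set A := pathRatio y k
  set B := pathRatio y (k + 1)
  have hA : 0 < A := h.pathRatio_pos k (by lia)
  have hB : 1 / 2 ≤ B := h.half_le_pathRatio (by lia)
  have hB0 : 0 < B := by linarith
  have hAB : 0 ≤ A - B := sub_nonneg.2 (h.pathRatio_succ_le (by lia))
  have hy : y = (1 - B) * A := by linarith [pathRatio_succ_mul hA.ne']
  have hnext : pathRatio y (k + 2) = 1 - y / B := rfl
  calc B - pathRatio y (k + 2) = (1 - B) / B * (A - B) := by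
        rw [hnext, hy]
        field_simp
        ring
    _ ≤ 1 * (A - B) := mul_le_mul_of_nonneg_right ((div_le_one hB0).2 (by linarith)) hAB
    _ = A - B := one_mul _

theorem pathRatio_sub_succ_le_of_le (h : IsCycleCritical m y) {k l : ℕ} (hkl : k ≤ l)
    (hl : l + 1 ≤ m + 2) :
    pathRatio y l - pathRatio y (l + 1) ≤ pathRatio y k - pathRatio y (k + 1) := by
  induction l, hkl using Nat.le_induction with
  | base => exact le_rfl
  | succ l _ ih => exact (h.pathRatio_succ_sub_succ_le hl).trans (ih (by lia))

theorem pathRatio_add_le (h : IsCycleCritical m y) {k l : ℕ} (hkl : k + l ≤ m + 1) :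
    pathRatio y (k + 1) + pathRatio y (l + 1) ≤ pathRatio y 1 + pathRatio y (k + l + 1) := by
  induction k with
  | zero => simp
  | succ k ih =>
    have hdecr := h.pathRatio_sub_succ_le_of_le (k := k + 1) (l := k + l + 1) (by lia) (by lia)
    rw [show k + 1 + l + 1 = k + l + 1 + 1 by lia]
    linarith [ih (by lia)]

/- By convexity the sum is largest at `(m, 0, 0)`, where it equals `2 * y + 2 * (1 - y)`. -/
theorem pathRatio_add_add_le (h : IsCycleCritical m y) {c d e : ℕ} (hm : c + d + e = m) :
    pathRatio y (c + 1) + pathRatio y (d + 1) + pathRatio y (e + 1) ≤ 2 := by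
  have hcd := h.pathRatio_add_le (k := c) (l := d) (by lia)
  have hcde := h.pathRatio_add_le (k := c + d) (l := e) (by lia)
  have hlast := h.pathRatio_penultimate
  rw [hm] at hcde
  linarith [pathRatio_one (y := y)]

end IsCycleCritical

/-! ### Sets whose components all meet a given set -/

section Components

variable {V : Type*} {G : SimpleGraph V} {p : V → Prop} {R S T : Finset V} {v : V}

/-- `R` is a union of components of the subgraph of `G` induced by `S`. -/
def ClosedIn (G : SimpleGraph V) (R S : Finset V) : Prop :=
  R ⊆ S ∧ ∀ a ∈ R, ∀ b ∈ S, G.Adj a b → b ∈ R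

/-- Every component of the subgraph of `G` induced by `S` contains a vertex satisfying `p`;
components are replaced by the nonempty sets closed in `S`. -/
def MeetsComponents (G : SimpleGraph V) (p : V → Prop) (S : Finset V) : Prop :=
  ∀ R, ClosedIn G R S → R.Nonempty → ∃ v ∈ R, p v

theorem ClosedIn.refl (G : SimpleGraph V) (S : Finset V) : ClosedIn G S S :=
  ⟨subset_rfl, fun _ _ _ hb _ => hb⟩

theorem ClosedIn.trans (hRS : ClosedIn G R S) (hST : ClosedIn G S T) : ClosedIn G R T :=
  ⟨hRS.1.trans hST.1, fun a ha b hb hab => hRS.2 a ha b (hST.2 a (hRS.1 ha) b hb hab) hab⟩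

theorem ClosedIn.mono_right (hR : ClosedIn G R T) (hRS : R ⊆ S) (hST : S ⊆ T) : ClosedIn G R S :=
  ⟨hRS, fun a ha b hb => hR.2 a ha b (hST hb)⟩

theorem ClosedIn.not_adj_of_mem_sdiff [DecidableEq V] (hR : ClosedIn G R S) :
    ∀ a ∈ R, ∀ b ∈ S \ R, ¬ G.Adj a b := fun a ha b hb hab =>
  (Finset.mem_sdiff.1 hb).2 (hR.2 a ha b (Finset.mem_sdiff.1 hb).1 hab)

theorem ClosedIn.sdiff [DecidableEq V] (hR : ClosedIn G R S) : ClosedIn G (S \ R) S := by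
  refine ⟨Finset.sdiff_subset, fun a ha b hb hab => Finset.mem_sdiff.2 ⟨hb, fun hbR => ?_⟩⟩
  exact hR.not_adj_of_mem_sdiff b hbR a ha hab.symm

theorem ClosedIn.union [DecidableEq V] (hR : ClosedIn G R S) (hT : ClosedIn G T S) :
    ClosedIn G (R ∪ T) S :=
  ⟨Finset.union_subset hR.1 hT.1, fun a ha b hb hab => Finset.mem_union.2 <|
    (Finset.mem_union.1 ha).imp (hR.2 a · b hb hab) (hT.2 a · b hb hab)⟩

theorem ClosedIn.inter [DecidableEq V] (hR : ClosedIn G R S) (hT : ClosedIn G T S) :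
    ClosedIn G (R ∩ T) S :=
  ⟨Finset.inter_subset_left.trans hR.1, fun a ha b hb hab => Finset.mem_inter.2
    ⟨hR.2 a (Finset.mem_inter.1 ha).1 b hb hab, hT.2 a (Finset.mem_inter.1 ha).2 b hb hab⟩⟩

theorem MeetsComponents.mono (hS : MeetsComponents G p S) (hR : ClosedIn G R S) :
    MeetsComponents G p R := fun _ hQ => hS _ (hQ.trans hR)

theorem meetsComponents_adj_erase [DecidableEq V] (hv : v ∈ S)
    (hconn : ∀ R, ClosedIn G R S → R.Nonempty → R = S) :
    MeetsComponents G (G.Adj v) (S.erase v) := by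
  intro R hR hne
  by_contra! hadj
  have hclosed : ClosedIn G R S := by
    refine ⟨hR.1.trans (S.erase_subset v), fun a ha b hb hab => ?_⟩
    refine hR.2 a ha b (Finset.mem_erase.2 ⟨?_, hb⟩) hab
    rintro rfl
    exact hadj a ha hab.symm
  rw [hconn R hclosed hne] at hR
  exact Finset.notMem_erase v S (hR.1 hv)

/-- The union of the components of the subgraph of `G` induced by `S` in which no vertex
satisfies `p`. -/
noncomputable def unmet (G : SimpleGraph V) (p : V → Prop) (S : Finset V) : Finset V :=
  open Classical in {w ∈ S | ∃ R, ClosedIn G R S ∧ (∀ v ∈ R, ¬ p v) ∧ w ∈ R}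

theorem mem_unmet {w : V} :
    w ∈ unmet G p S ↔ ∃ R, ClosedIn G R S ∧ (∀ v ∈ R, ¬ p v) ∧ w ∈ R := by
  simp only [unmet, Finset.mem_filter, and_iff_right_iff_imp]
  rintro ⟨R, hR, -, hw⟩
  exact hR.1 hw

theorem closedIn_unmet (G : SimpleGraph V) (p : V → Prop) (S : Finset V) :
    ClosedIn G (unmet G p S) S := by
  refine ⟨fun w hw => ?_, fun a ha b hb hab => ?_⟩
  · obtain ⟨R, hR, -, hw⟩ := mem_unmet.1 hw
    exact hR.1 hw
  · obtain ⟨R, hR, hp, ha⟩ := mem_unmet.1 ha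
    exact mem_unmet.2 ⟨R, hR, hp, hR.2 a ha b hb hab⟩

theorem not_of_mem_unmet (hv : v ∈ unmet G p S) : ¬ p v := by
  obtain ⟨R, -, hp, hv⟩ := mem_unmet.1 hv
  exact hp v hv

theorem meetsComponents_of_disjoint_unmet (hR : ClosedIn G R S) (hd : Disjoint R (unmet G p S)) :
    MeetsComponents G p R := by
  rintro Q hQ ⟨w, hw⟩
  by_contra! hp
  exact Finset.disjoint_left.1 hd (hQ.1 hw) (mem_unmet.2 ⟨Q, hQ.trans hR, hp, hw⟩)

end Components

section Ratio

variable {V : Type*} {G : SimpleGraph V} {p : V → Prop} [DecidablePred p] {R S T : Finset V}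
  {v : V} {y α β : ℝ} {m : ℕ}

theorem indepSum_eq_mul_of_closedIn [DecidableEq V] (hR : ClosedIn G R S) (hT : T ⊆ S) :
    indepSum G y T = indepSum G y (T ∩ R) * indepSum G y (T \ R) := by
  rw [← indepSum_union (Finset.disjoint_sdiff_inter T R).symm, Finset.union_comm,
    Finset.sdiff_union_inter]
  exact fun a ha b hb => hR.not_adj_of_mem_sdiff a (Finset.mem_inter.1 ha).2 b
    (Finset.sdiff_subset_sdiff hT subset_rfl hb)

theorem indepSum_le_mul_of_closedIn [DecidableEq V] (hF : ∀ S, 0 ≤ indepSum G y S)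
    (hR : ClosedIn G R S) (hα : indepSum G y R ≤ α * indepSum G y {w ∈ R | ¬ p w})
    (hβ : indepSum G y (S \ R) ≤ β * indepSum G y {w ∈ S \ R | ¬ p w}) :
    indepSum G y S ≤ α * β * indepSum G y {w ∈ S | ¬ p w} := by
  have hinter : {w ∈ S | ¬ p w} ∩ R = {w ∈ R | ¬ p w} := by
    rw [Finset.filter_inter, Finset.inter_eq_right.2 hR.1]
  have hsdiff : {w ∈ S | ¬ p w} \ R = {w ∈ S \ R | ¬ p w} := by grind
  rw [indepSum_eq_mul_of_closedIn hR (Finset.filter_subset _ _), hinter, hsdiff, mul_mul_mul_comm,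
    indepSum_eq_mul_of_closedIn hR subset_rfl, Finset.inter_eq_right.2 hR.1]
  exact mul_le_mul hα hβ (hF _) ((hF R).trans hα)

theorem indepSum_le_pathRatio_mul_of_erase [DecidableEq V] [DecidableRel G.Adj] {k : ℕ}
    (hy : 0 ≤ y) (hF : ∀ S, 0 ≤ indepSum G y S) (hk : 0 < pathRatio y k)
    (hk' : 0 ≤ pathRatio y (k + 1)) (hv : v ∈ S) (hpv : p v)
    (herase : indepSum G y (S.erase v) ≤
      pathRatio y k * indepSum G y {w ∈ S.erase v | ¬ G.Adj v w}) :
    indepSum G y S ≤ pathRatio y (k + 1) * indepSum G y {w ∈ S | ¬ p w} := by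
  have hsub : {w ∈ S | ¬ p w} ⊆ S.erase v := by grind
  have hdiv := mul_le_mul_of_nonneg_left ((div_le_iff₀' hk).2 herase) hy
  calc indepSum G y S
      = indepSum G y (S.erase v) - y * indepSum G y {w ∈ S.erase v | ¬ G.Adj v w} :=
        indepSum_eq_erase_sub hv
    _ ≤ indepSum G y (S.erase v) - y * (indepSum G y (S.erase v) / pathRatio y k) :=
        sub_le_sub_left hdiv _
    _ = pathRatio y (k + 1) * indepSum G y (S.erase v) := by
        rw [pathRatio]
        ring
    _ ≤ pathRatio y (k + 1) * indepSum G y {w ∈ S | ¬ p w} :=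
        mul_le_mul_of_nonneg_left (indepSum_antitone hy hF hsub) hk'

/- A set with several components is handled by supermultiplicativity of the path ratios. In a
connected set a vertex satisfying `p` is deleted: its neighbours then meet all components of the
rest, which is why `p` has to vary in the induction. -/
theorem indepSum_le_pathRatio_mul (h : IsCycleCritical m y) (hF : ∀ S, 0 ≤ indepSum G y S)
    (hS : #S ≤ m + 2) (hp : MeetsComponents G p S) :
    indepSum G y S ≤ pathRatio y #S * indepSum G y {w ∈ S | ¬ p w} := by
  classical
  induction S using Finset.strongInduction generalizing p with
  | H S ih =>
    rcases S.eq_empty_or_nonempty with rfl | hne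
    · simp [pathRatio]
    by_cases hconn : ∀ R, ClosedIn G R S → R.Nonempty → R = S
    · obtain ⟨v, hv, hpv⟩ := hp S (.refl G S) hne
      have hcard : #(S.erase v) + 1 = #S := Finset.card_erase_add_one hv
      rw [← hcard]
      exact indepSum_le_pathRatio_mul_of_erase h.pos.le hF (h.pathRatio_pos _ (by lia))
        (h.pathRatio_pos _ (by lia)).le hv hpv
        (ih _ (Finset.erase_ssubset hv) (by lia) (meetsComponents_adj_erase hv hconn))
    · push Not at hconn
      obtain ⟨R, hR, hRne, hRS⟩ := hconn
      have hcard : #R + #(S \ R) = #S := by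
        rw [add_comm, Finset.card_sdiff_add_card_eq_card hR.1]
      calc indepSum G y S
          ≤ pathRatio y #R * pathRatio y #(S \ R) * indepSum G y {w ∈ S | ¬ p w} :=
            indepSum_le_mul_of_closedIn hF hR
              (ih R (hR.1.ssubset_of_ne hRS) (by lia) (hp.mono hR))
              (ih (S \ R) (Finset.sdiff_ssubset hR.1 hRne) (by lia) (hp.mono hR.sdiff))
        _ ≤ pathRatio y #S * indepSum G y {w ∈ S | ¬ p w} :=
            mul_le_mul_of_nonneg_right (hcard ▸ h.pathRatio_mul_le (by lia)) (hF _)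

end Ratio

/-! ### Expansion at an edge of a cycle -/

section TwoPredicates

variable {V : Type*} {G : SimpleGraph V} {p q : V → Prop} {S : Finset V} {y : ℝ} {m : ℕ}

theorem disjoint_unmet (hpq : MeetsComponents G (fun w => p w ∨ q w) S) :
    Disjoint (unmet G p S) (unmet G q S) := by
  classical
  rw [Finset.disjoint_iff_inter_eq_empty, ← Finset.not_nonempty_iff_eq_empty]
  intro hne
  obtain ⟨w, hw, hpqw⟩ := hpq _ ((closedIn_unmet G p S).inter (closedIn_unmet G q S)) hne
  rw [Finset.mem_inter] at hw
  exact hpqw.elim (not_of_mem_unmet hw.1) (not_of_mem_unmet hw.2)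

theorem indepSum_le_pathRatio_mul_mul [DecidableEq V] [DecidablePred p] (h : IsCycleCritical m y)
    (hF : ∀ S, 0 ≤ indepSum G y S) (hS : #S ≤ m + 2)
    (hpq : MeetsComponents G (fun w => p w ∨ q w) S) :
    indepSum G y S ≤ pathRatio y #(unmet G q S) * pathRatio y #(S \ (unmet G p S ∪ unmet G q S)) *
      indepSum G y {w ∈ S | ¬ p w} := by
  have hP := closedIn_unmet G p S
  have hQ := closedIn_unmet G q S
  have hd := disjoint_unmet hpq
  have hQsub : unmet G q S ⊆ S \ unmet G p S := Finset.subset_sdiff.2 ⟨hQ.1, hd.symm⟩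
  have hboundP : indepSum G y (unmet G p S) ≤ 1 * indepSum G y {w ∈ unmet G p S | ¬ p w} := by
    rw [one_mul, Finset.filter_true_of_mem fun w => not_of_mem_unmet]
  have hboundQ := indepSum_le_pathRatio_mul h hF ((Finset.card_le_card hQ.1).trans hS)
    (meetsComponents_of_disjoint_unmet (p := p) hQ hd.symm)
  have hboundC := indepSum_le_pathRatio_mul h hF
    ((Finset.card_le_card Finset.sdiff_subset).trans hS)
    (meetsComponents_of_disjoint_unmet (p := p) (hP.union hQ).sdiff
      (Finset.sdiff_disjoint.mono_right Finset.subset_union_left))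
  rw [← Finset.sup_eq_union, ← sdiff_sdiff_left] at hboundC ⊢
  simpa only [one_mul] using indepSum_le_mul_of_closedIn hF hP hboundP
    (indepSum_le_mul_of_closedIn hF (hQ.mono_right hQsub Finset.sdiff_subset) hboundQ hboundC)

/- Adding the bounds for `p` and `q` leaves `A ≤ y / D + y / B` for the path ratios of the three
parts of `S`, which is `IsCycleCritical.pathRatio_add_add_le` rewritten by the recurrence. -/
theorem indepSum_le_mul_add [DecidableEq V] [DecidablePred p] [DecidablePred q]
    (h : IsCycleCritical m y) (hF : ∀ S, 0 ≤ indepSum G y S) (hS : #S = m + 1)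
    (hpq : MeetsComponents G (fun w => p w ∨ q w) S)
    (hne : (S \ (unmet G p S ∪ unmet G q S)).Nonempty) :
    indepSum G y S ≤ y * (indepSum G y {w ∈ S | ¬ p w} + indepSum G y {w ∈ S | ¬ q w}) := by
  have hcard : #(S \ (unmet G p S ∪ unmet G q S)) + #(unmet G p S) + #(unmet G q S) = m + 1 := by
    rw [add_assoc, ← Finset.card_union_of_disjoint (disjoint_unmet hpq), ← hS,
      Finset.card_sdiff_add_card_eq_card
        ((closedIn_unmet G p S).union (closedIn_unmet G q S)).1]
  have hp := indepSum_le_pathRatio_mul_mul h hF (hS.trans_le (by lia)) hpq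
  have hq := indepSum_le_pathRatio_mul_mul (p := q) (q := p) h hF (hS.trans_le (by lia))
    (by simpa only [or_comm] using hpq)
  rw [Finset.union_comm] at hq
  obtain ⟨c, hc⟩ := Nat.exists_eq_succ_of_ne_zero hne.card_ne_zero
  have hsum := h.pathRatio_add_add_le (c := c) (d := #(unmet G p S)) (e := #(unmet G q S)) (by lia)
  rw [hc, Nat.succ_eq_add_one] at hp hq
  set A := pathRatio y (c + 1)
  set B := pathRatio y #(unmet G p S)
  set D := pathRatio y #(unmet G q S)
  have hA : 0 < A := h.pathRatio_pos _ (by lia)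
  have hB : 0 < B := h.pathRatio_pos _ (by lia)
  have hD : 0 < D := h.pathRatio_pos _ (by lia)
  have hABD : A ≤ y / D + y / B := by
    have hB' : pathRatio y (#(unmet G p S) + 1) = 1 - y / B := rfl
    have hD' : pathRatio y (#(unmet G q S) + 1) = 1 - y / D := rfl
    linarith
  refine le_of_mul_le_mul_left ?_ hA
  calc A * indepSum G y S
      ≤ (y / D + y / B) * indepSum G y S := mul_le_mul_of_nonneg_right hABD (hF S)
    _ = y / D * indepSum G y S + y / B * indepSum G y S := add_mul _ _ _
    _ ≤ y / D * (D * A * indepSum G y {w ∈ S | ¬ p w}) +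
          y / B * (B * A * indepSum G y {w ∈ S | ¬ q w}) :=
        add_le_add (mul_le_mul_of_nonneg_left hp (div_pos h.pos hD).le)
          (mul_le_mul_of_nonneg_left hq (div_pos h.pos hB).le)
    _ = A * (y * (indepSum G y {w ∈ S | ¬ p w} + indepSum G y {w ∈ S | ¬ q w})) := by
        field_simp

end TwoPredicates

section CycleEdge

variable {V : Type*} [Fintype V] {G : SimpleGraph V} {u v : V} {y : ℝ} {m : ℕ}

theorem meetsComponents_compl_pair [DecidableEq V] (hG : G.Connected) (u v : V) :
    MeetsComponents G (fun w => G.Adj u w ∨ G.Adj v w) {u, v}ᶜ := by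
  rintro R hR ⟨w, hw⟩
  by_contra! hadj
  have huR : u ∉ R := fun hu => by simpa using hR.1 hu
  obtain ⟨walk⟩ := hG.preconnected w u
  obtain ⟨d, -, hdR, hdR'⟩ := walk.exists_boundary_dart (R : Set V) hw huR
  refine hdR' (hR.2 d.fst hdR d.snd ?_ d.adj)
  have hu : d.snd ≠ u := fun h => (hadj d.fst hdR).1 (h ▸ d.adj.symm)
  have hv : d.snd ≠ v := fun h => (hadj d.fst hdR).2 (h ▸ d.adj.symm)
  simp [hu, hv]

/- Otherwise `u` together with the components of `{u, v}ᶜ` not adjacent to `v` is closed under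
adjacency once the edge `uv` is removed, and the edge is a bridge. -/
theorem compl_pair_sdiff_unmet_nonempty [DecidableEq V] (huv : G.Adj u v)
    (hbridge : ¬ G.IsBridge s(u, v)) :
    (({u, v}ᶜ : Finset V) \
      (unmet G (G.Adj u) {u, v}ᶜ ∪ unmet G (G.Adj v) {u, v}ᶜ)).Nonempty := by
  set Rv := unmet G (G.Adj v) {u, v}ᶜ with hRv
  have hclosed : ClosedIn G Rv {u, v}ᶜ := closedIn_unmet G _ _
  have hvRv : v ∉ insert u Rv := by
    rw [Finset.mem_insert, not_or]
    exact ⟨huv.ne', fun hv => by simpa using hclosed.1 hv⟩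
  obtain ⟨walk⟩ := not_not.1 hbridge
  obtain ⟨⟨⟨a, b⟩, hab⟩, -, ha, hb⟩ :=
    walk.exists_boundary_dart (insert u Rv : Finset V) (Finset.mem_insert_self u Rv) hvRv
  simp only [Finset.mem_coe, Finset.mem_insert, not_or] at ha hb
  rw [deleteEdges_adj, Set.mem_singleton_iff] at hab
  rcases ha with rfl | ha
  · have hbv : b ≠ v := fun h => hab.2 (h ▸ rfl)
    refine ⟨b, Finset.mem_sdiff.2 ⟨by simp [hb.1, hbv], ?_⟩⟩
    rw [Finset.mem_union, not_or]
    exact ⟨fun h => not_of_mem_unmet h hab.1, hb.2⟩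
  · have hbv : b ≠ v := fun h => not_of_mem_unmet ha (h ▸ hab.1.symm)
    exact absurd (hclosed.2 a ha b (by simp [hb.1, hbv]) hab.1) hb.2

theorem indepSum_univ_of_adj [DecidableEq V] [DecidableRel G.Adj] (huv : G.Adj u v) :
    indepSum G y Finset.univ = indepSum G y {u, v}ᶜ -
      y * (indepSum G y {w ∈ ({u, v}ᶜ : Finset V) | ¬ G.Adj u w} +
        indepSum G y {w ∈ ({u, v}ᶜ : Finset V) | ¬ G.Adj v w}) := by
  have herase : (Finset.univ.erase u).erase v = {u, v}ᶜ := by grind [Finset.mem_compl]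
  have hu : ({w ∈ Finset.univ.erase u | ¬ G.Adj u w} : Finset V) =
      {w ∈ ({u, v}ᶜ : Finset V) | ¬ G.Adj u w} := by
    grind [Finset.mem_compl]
  rw [indepSum_eq_erase_sub (Finset.mem_univ u), hu,
    indepSum_eq_erase_sub (Finset.mem_erase.2 ⟨huv.ne', Finset.mem_univ v⟩), herase]
  ring

theorem indepSum_univ_nonpos (h : IsCycleCritical m y) (hF : ∀ S, 0 ≤ indepSum G y S)
    (hcard : Fintype.card V = m + 3) (hG : G.Connected) (huv : G.Adj u v)
    (hbridge : ¬ G.IsBridge s(u, v)) : indepSum G y Finset.univ ≤ 0 := by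
  classical
  have hW : #({u, v}ᶜ : Finset V) = m + 1 := by
    rw [Finset.card_compl, Finset.card_pair huv.ne, hcard]
    rfl
  rw [indepSum_univ_of_adj huv, sub_nonpos]
  exact indepSum_le_mul_add h hF hW (meetsComponents_compl_pair hG u v)
    (compl_pair_sdiff_unmet_nonempty huv hbridge)

end CycleEdge

/-! ### Arcs of the cycle -/

section Cycle

variable {m i k : ℕ} {y : ℝ}

theorem cycleGraph_adj_iff_val {u v : Fin (m + 3)} :
    (cycleGraph (m + 3)).Adj u v ↔ u.val + 1 = v.val ∨ v.val + 1 = u.val ∨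
      (u.val = 0 ∧ v.val = m + 2) ∨ (v.val = 0 ∧ u.val = m + 2) := by
  rw [cycleGraph_adj']
  rcases le_or_gt u v with huv | hvu
  · rcases huv.eq_or_lt with rfl | huv'
    · rw [sub_self, Fin.val_zero]
      omega
    rw [Fin.sub_val_of_le huv, Fin.coe_sub_iff_lt.2 huv']
    rw [Fin.lt_def] at huv'
    omega
  · rw [Fin.sub_val_of_le hvu.le, Fin.coe_sub_iff_lt.2 hvu]
    rw [Fin.lt_def] at hvu
    omega

/-- The `k` consecutive vertices `i, …, i + k - 1` of the cycle on `m + 3` vertices, cut off after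
the vertex `m + 2`. -/
def cycleArc (m i k : ℕ) : Finset (Fin (m + 3)) := {w | i ≤ w.val ∧ w.val < i + k}

theorem mem_cycleArc {w : Fin (m + 3)} : w ∈ cycleArc m i k ↔ i ≤ w.val ∧ w.val < i + k := by
  simp [cycleArc]

theorem cycleArc_zero : cycleArc m i 0 = ∅ := by
  ext w
  simp only [mem_cycleArc, Finset.notMem_empty, iff_false]
  omega

theorem cycleArc_ne_univ (hk : k ≤ m + 2) : cycleArc m i k ≠ Finset.univ := by
  intro h
  have h0 : 0 ∈ cycleArc m i k := h ▸ Finset.mem_univ 0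
  have hlast : Fin.last (m + 2) ∈ cycleArc m i k := h ▸ Finset.mem_univ _
  simp only [mem_cycleArc, Fin.val_zero, Fin.val_last] at h0 hlast
  omega

theorem indepSum_cycleArc_succ (hik : i + k < m + 3) (hk : k < m + 2) :
    indepSum (cycleGraph (m + 3)) y (cycleArc m i (k + 1)) =
      indepSum (cycleGraph (m + 3)) y (cycleArc m i k) -
        y * indepSum (cycleGraph (m + 3)) y (cycleArc m i (k - 1)) := by
  set z : Fin (m + 3) := ⟨i + k, hik⟩
  have hz : z.val = i + k := rfl
  have hinsert : cycleArc m i (k + 1) = insert z (cycleArc m i k) := by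
    ext w
    simp only [Finset.mem_insert, mem_cycleArc, Fin.ext_iff]
    omega
  have hnonadj : {w ∈ cycleArc m i k | ¬ (cycleGraph (m + 3)).Adj z w} = cycleArc m i (k - 1) := by
    ext w
    simp only [Finset.mem_filter, mem_cycleArc, cycleGraph_adj_iff_val]
    omega
  rw [hinsert, indepSum_insert (by simp [mem_cycleArc, hz]), hnonadj]

theorem indepSum_cycleGraph_univ :
    indepSum (cycleGraph (m + 3)) y Finset.univ =
      indepSum (cycleGraph (m + 3)) y (cycleArc m 0 (m + 2)) -
        y * indepSum (cycleGraph (m + 3)) y (cycleArc m 1 m) := by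
  set z := Fin.last (m + 2)
  have hz : z.val = m + 2 := rfl
  have hinsert : Finset.univ = insert z (cycleArc m 0 (m + 2)) := by
    ext w
    simp only [Finset.mem_univ, Finset.mem_insert, mem_cycleArc, Fin.ext_iff, true_iff]
    omega
  have hnonadj : {w ∈ cycleArc m 0 (m + 2) | ¬ (cycleGraph (m + 3)).Adj z w} = cycleArc m 1 m := by
    ext w
    simp only [Finset.mem_filter, mem_cycleArc, cycleGraph_adj_iff_val]
    omega
  rw [hinsert, indepSum_insert (by simp [mem_cycleArc, hz]), hnonadj]

theorem indepSum_cycleArc_pos (hy : 0 < y) (hF : ∀ S, 0 ≤ indepSum (cycleGraph (m + 3)) y S)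
    (hk : k ≤ m + 2) : 0 < indepSum (cycleGraph (m + 3)) y (cycleArc m i k) :=
  indepSum_pos_of_ne_univ cycleGraph_connected hy hF (cycleArc_ne_univ hk)

theorem indepSum_cycleArc_succ_eq_pathRatio_mul (hy : 0 < y)
    (hF : ∀ S, 0 ≤ indepSum (cycleGraph (m + 3)) y S) (hik : i + k < m + 3) (hk : k < m + 2) :
    indepSum (cycleGraph (m + 3)) y (cycleArc m i (k + 1)) =
      pathRatio y (k + 1) * indepSum (cycleGraph (m + 3)) y (cycleArc m i k) := by
  induction k with
  | zero =>
    rw [indepSum_cycleArc_succ hik hk, cycleArc_zero, indepSum_empty, pathRatio_one]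
    ring
  | succ k ih =>
    have hprev := ih (by omega) (by omega)
    have hpos := indepSum_cycleArc_pos (i := i) hy hF hk.le
    have hratio : pathRatio y (k + 1) ≠ 0 := left_ne_zero_of_mul (hprev ▸ hpos.ne')
    rw [indepSum_cycleArc_succ hik hk, Nat.add_sub_cancel, pathRatio, sub_mul, one_mul, hprev]
    field_simp

theorem indepSum_cycleArc (hy : 0 < y) (hF : ∀ S, 0 ≤ indepSum (cycleGraph (m + 3)) y S)
    (hik : i + k ≤ m + 3) (hk : k ≤ m + 2) :
    indepSum (cycleGraph (m + 3)) y (cycleArc m i k) =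
      ∏ j ∈ Finset.range k, pathRatio y (j + 1) := by
  induction k with
  | zero => rw [cycleArc_zero, indepSum_empty, Finset.prod_range_zero]
  | succ k ih =>
    rw [indepSum_cycleArc_succ_eq_pathRatio_mul hy hF hik hk, ih (by omega) (by omega),
      Finset.prod_range_succ, mul_comm]

theorem isCycleCritical_of_indepSum_eq_zero (hy : 0 < y)
    (hF : ∀ S, 0 ≤ indepSum (cycleGraph (m + 3)) y S)
    (hroot : indepSum (cycleGraph (m + 3)) y Finset.univ = 0) : IsCycleCritical m y := by
  have hpos : ∀ k ≤ m + 2, 0 < pathRatio y k := by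
    rintro (_ | k) hk
    · exact one_pos
    · have harc := indepSum_cycleArc_pos (i := 0) hy hF hk
      rw [indepSum_cycleArc_succ_eq_pathRatio_mul hy hF (by omega) hk] at harc
      exact pos_of_mul_pos_left harc (hF _)
  have hprod : 0 < ∏ j ∈ Finset.range m, pathRatio y (j + 1) :=
    Finset.prod_pos fun j hj => hpos _ (by grind)
  have hmul : pathRatio y (m + 2) * pathRatio y (m + 1) = y := by
    rw [indepSum_cycleGraph_univ, indepSum_cycleArc hy hF (by omega) le_rfl,
      indepSum_cycleArc hy hF (by omega) (by omega), Finset.prod_range_succ,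
      Finset.prod_range_succ] at hroot
    refine mul_left_cancel₀ hprod.ne' ?_
    linarith
  refine ⟨hy, hpos, ?_⟩
  have hpen := hpos (m + 1) (by omega)
  have hsucc := pathRatio_succ_mul hpen.ne'
  refine mul_right_cancel₀ hpen.ne' ?_
  linarith

theorem isCycleCritical_neg_xi (m : ℕ) : IsCycleCritical m (-xi (cycleGraph (m + 3))) :=
  isCycleCritical_of_indepSum_eq_zero (neg_pos.2 (xi_neg _)) (indepSum_neg_xi_nonneg _)
    (indepSum_neg_xi_univ _)

end Cycle

theorem exists_adj_not_isBridge {V : Type*} {G : SimpleGraph V} (hG : ¬ G.IsAcyclic) :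
    ∃ u v, G.Adj u v ∧ ¬ G.IsBridge s(u, v) := by
  rw [isAcyclic_iff_forall_adj_isBridge] at hG
  push Not at hG
  exact hG

theorem xi_cycleGraph_le_xi {V : Type*} [Fintype V] {G : SimpleGraph V} (hG : G.Connected)
    (hcyc : ¬ G.IsAcyclic) : xi (cycleGraph (Fintype.card V)) ≤ xi G := by
  classical
  have := hG.nonempty
  obtain ⟨m, hm⟩ := Nat.exists_eq_add_of_le' (three_le_card_of_not_isAcyclic hcyc)
  obtain ⟨u, v, huv, hbridge⟩ := exists_adj_not_isBridge hcyc
  rw [hm]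
  by_contra! hlt
  have hpos := indepSum_pos (G := G) (neg_lt_neg hlt)
  exact (hpos Finset.univ).not_ge (indepSum_univ_nonpos (isCycleCritical_neg_xi m)
    (fun S => (hpos S).le) hm hG huv hbridge)

/-! ### Unicyclic graphs -/

section Unicyclic

variable {V : Type*} [Fintype V] {G : SimpleGraph V}

theorem Unicyclic.not_isAcyclic (hG : Unicyclic G) : ¬ G.IsAcyclic := by
  intro hacyc
  have hcard := (isTree_iff_connected_and_card.1 ⟨hG.1, hacyc⟩).2
  have hedges := hG.2
  rw [Nat.card_coe_set_eq, Nat.card_eq_fintype_card] at hcard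
  omega

theorem Unicyclic.exists_isAcyclic_deleteEdges (hG : Unicyclic G) :
    ∃ e, (G.deleteEdges {e}).IsAcyclic := by
  obtain ⟨u, v, huv, hbridge⟩ := exists_adj_not_isBridge hG.not_isAcyclic
  refine ⟨s(u, v), (isTree_iff_connected_and_card.2
    ⟨hG.1.connected_delete_edge_of_not_isBridge hbridge, ?_⟩).isAcyclic⟩
  rw [edgeSet_deleteEdges, Nat.card_coe_set_eq, Nat.card_eq_fintype_card,
    Set.ncard_sdiff_singleton_add_one (G.mem_edgeSet.2 huv) (Set.toFinite _), hG.2]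

end Unicyclic

/-- If `G` is connected unicyclic of order `n ≥ 3` then
`ξ(C_n) ≤ ξ(G) ≤ ξ(U_n)`. -/
theorem stmt2 {V : Type*} [Fintype V] (n : ℕ) (hn : 3 ≤ n) (G : SimpleGraph V)
    (hcard : Fintype.card V = n) (hG : Unicyclic G) :
    xi (cycleGraph n) ≤ xi G ∧ xi G ≤ xi (Ugraph n) := by
  subst hcard
  obtain ⟨e, he⟩ := hG.exists_isAcyclic_deleteEdges
  exact ⟨xi_cycleGraph_le_xi hG.1 hG.not_isAcyclic, xi_le_xi_Ugraph hG.not_isAcyclic he⟩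
end

section
/- A tree T with at least 2 vertices is well-covered if and only if T is isomorphic to T'* for some tree T'. -/
/-!
A maximal independent set of a corona contains exactly one end of each pendant edge `v v*`, so
coronas are well-covered.

Conversely, in a well-covered graph without isolated vertices every set of vertices has at least as
many neighbours as elements (Berge), so by Hall's theorem a bipartite one has a perfect matching. If
`u v` is a matching edge, `x` a neighbour of `u` and `y` a neighbour of `v`, then `x` and `y` are
adjacent (Ravindra): a maximal independent set containing both would miss `u` and `v` and hence be
smaller than a colour class. When there is no 4-cycle, this forces every matching edge to be
pendant, and the graph is the corona of the subgraph induced on the other ends of these edges.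
-/

open Polynomial SimpleGraph

section Independent

variable {V W : Type*} {G : SimpleGraph V} {H : SimpleGraph W} {s t : Finset V}

lemma IsIndepFinset.mono_s3 (ht : IsIndepFinset G t) (hst : s ⊆ t) : IsIndepFinset G s :=
  fun u hu v hv => ht u (hst hu) v (hst hv)

lemma isIndepFinset_pair {u v : V} [DecidableEq V] (huv : ¬ G.Adj u v) :
    IsIndepFinset G {u, v} := by
  simp [IsIndepFinset, huv, G.adj_comm v u]

lemma isIndepFinset_union [DecidableEq V] :
    IsIndepFinset G (s ∪ t) ↔
      IsIndepFinset G s ∧ IsIndepFinset G t ∧ ∀ u ∈ s, ∀ v ∈ t, ¬ G.Adj u v := by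
  simp only [IsIndepFinset, Finset.mem_union]
  grind [G.adj_comm]

lemma isIndepFinset_map_iso (φ : G ≃g H) :
    IsIndepFinset H (s.map φ.toEquiv.toEmbedding) ↔ IsIndepFinset G s := by
  simp only [IsIndepFinset, Finset.forall_mem_map]
  exact forall₄_congr fun _ _ _ _ => not_congr φ.map_adj_iff

lemma maximal_isIndepFinset_iff [DecidableEq V] :
    Maximal (IsIndepFinset G) s ↔
      IsIndepFinset G s ∧ ∀ v ∉ s, ¬ IsIndepFinset G (insert v s) :=
  Finset.maximal_iff_forall_insert fun _ _ ht hst => ht.mono_s3 hst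

lemma exists_adj_of_maximal_isIndepFinset (hs : Maximal (IsIndepFinset G) s) {v : V}
    (hv : v ∉ s) : ∃ w ∈ s, G.Adj v w := by
  classical
  by_contra! h
  refine (maximal_isIndepFinset_iff.1 hs).2 v hv ?_
  rw [Finset.insert_eq, isIndepFinset_union]
  exact ⟨by simp [IsIndepFinset], hs.prop, by simpa using h⟩

lemma maximal_isIndepFinset_map_iso (φ : G ≃g H) (hs : Maximal (IsIndepFinset G) s) :
    Maximal (IsIndepFinset H) (s.map φ.toEquiv.toEmbedding) := by
  classical
  refine maximal_isIndepFinset_iff.2 ⟨(isIndepFinset_map_iso φ).2 hs.prop, fun w hw hins => ?_⟩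
  obtain ⟨v, rfl⟩ := φ.toEquiv.surjective w
  refine (maximal_isIndepFinset_iff.1 hs).2 v (fun hv => hw (Finset.mem_map_of_mem _ hv)) ?_
  rw [← isIndepFinset_map_iso φ, Finset.map_insert]
  exact hins

lemma wellCovered_iff_forall_maximal :
    WellCovered G ↔ ∀ s t, Maximal (IsIndepFinset G) s → Maximal (IsIndepFinset G) t →
      s.card = t.card := by
  classical
  simp only [WellCovered, maximal_isIndepFinset_iff, and_imp]

lemma WellCovered.of_iso (hH : WellCovered H) (φ : G ≃g H) : WellCovered G :=
  wellCovered_iff_forall_maximal.2 fun s t hs ht => by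
    simpa using wellCovered_iff_forall_maximal.1 hH _ _
      (maximal_isIndepFinset_map_iso φ hs) (maximal_isIndepFinset_map_iso φ ht)

lemma WellCovered.exists_maximum_superset [Finite V] (hG : WellCovered G)
    (hs : IsIndepFinset G s) :
    ∃ t, s ⊆ t ∧ IsIndepFinset G t ∧ ∀ u, IsIndepFinset G u → u.card ≤ t.card := by
  have extend : ∀ {u}, IsIndepFinset G u → ∃ t, u ⊆ t ∧ Maximal (IsIndepFinset G) t :=
    fun hu => Finite.exists_le_maximal hu
  obtain ⟨t, hst, ht⟩ := extend hs
  refine ⟨t, hst, ht.prop, fun u hu => ?_⟩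
  obtain ⟨t', hut', ht'⟩ := extend hu
  exact (Finset.card_le_card hut').trans (wellCovered_iff_forall_maximal.1 hG _ _ ht' ht).le

end Independent

section Matching

variable {V : Type*} {G : SimpleGraph V}

open Classical in
/-- Induction on `s`: for a maximum independent set `t` containing a neighbour of a point of `s`,
replacing `t ∩ N(s)` by `s \ t` gives `|s \ t| ≤ |t ∩ N(s)|`, while `N(s ∩ t)` is disjoint
from `t`. -/
lemma WellCovered.card_le_card_biUnion_neighborFinset_of_isIndepFinset [Fintype V]
    (hG : WellCovered G) (hiso : ∀ v, ∃ w, G.Adj v w) {s : Finset V} (hs : IsIndepFinset G s) :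
    s.card ≤ (s.biUnion (G.neighborFinset ·)).card := by
  induction s using Finset.strongInduction with | H s ih
  obtain rfl | ⟨v, hv⟩ := s.eq_empty_or_nonempty
  · simp
  obtain ⟨w, hvw⟩ := hiso v
  obtain ⟨t, hwt, ht, hmax⟩ := hG.exists_maximum_superset (s := {w}) (by simp [IsIndepFinset])
  rw [Finset.singleton_subset_iff] at hwt
  have hvt : v ∉ t := fun hvt => ht v hvt w hwt hvw
  set N := s.biUnion (G.neighborFinset ·) with hN
  have mem_N {x} : x ∈ N ↔ ∃ u ∈ s, G.Adj u x := by simp [hN]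
  have inter_le : (s ∩ t).card ≤ (N \ t).card := by
    have hssub : s ∩ t ⊂ s := inf_lt_left.2 fun hst => hvt (hst hv)
    refine (ih _ hssub (hs.mono_s3 hssub.subset)).trans (Finset.card_le_card fun x hx => ?_)
    obtain ⟨u, ⟨hus, hut⟩, hux⟩ : ∃ u, (u ∈ s ∧ u ∈ t) ∧ G.Adj u x := by simpa using hx
    exact Finset.mem_sdiff.2 ⟨mem_N.2 ⟨u, hus, hux⟩, fun hxt => ht u hut x hxt hux⟩
  have sdiff_le : (s \ t).card ≤ (N ∩ t).card := by
    have hexch : IsIndepFinset G ((t \ N) ∪ (s \ t)) := isIndepFinset_union.2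
      ⟨ht.mono_s3 Finset.sdiff_subset, hs.mono_s3 Finset.sdiff_subset, fun x hx u hu hxu =>
        (Finset.mem_sdiff.1 hx).2 (mem_N.2 ⟨u, (Finset.mem_sdiff.1 hu).1, hxu.symm⟩)⟩
    have hle := hmax _ hexch
    rw [Finset.card_union_of_disjoint (Finset.disjoint_sdiff.mono_left Finset.sdiff_subset),
      ← Finset.card_sdiff_add_card_inter t N, Finset.inter_comm t N] at hle
    exact Nat.le_of_add_le_add_left hle
  calc s.card = (s \ t).card + (s ∩ t).card := (Finset.card_sdiff_add_card_inter s t).symm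
    _ ≤ (N ∩ t).card + (N \ t).card := Nat.add_le_add sdiff_le inter_le
    _ = N.card := Finset.card_inter_add_card_sdiff N t

open Classical in
/-- The set `s \ N(s)` is independent and its neighbours lie outside `s`. -/
lemma WellCovered.card_le_card_biUnion_neighborFinset [Fintype V] (hG : WellCovered G)
    (hiso : ∀ v, ∃ w, G.Adj v w) (s : Finset V) :
    s.card ≤ (s.biUnion (G.neighborFinset ·)).card := by
  set N := s.biUnion (G.neighborFinset ·) with hN
  have mem_N {x} : x ∈ N ↔ ∃ u ∈ s, G.Adj u x := by simp [hN]
  have hindep : IsIndepFinset G (s \ N) := fun u hu v hv huv =>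
    (Finset.mem_sdiff.1 hv).2 (mem_N.2 ⟨u, (Finset.mem_sdiff.1 hu).1, huv⟩)
  have hsub : (s \ N).biUnion (G.neighborFinset ·) ⊆ N \ s := fun x hx => by
    obtain ⟨u, ⟨hus, huN⟩, hux⟩ : ∃ u, (u ∈ s ∧ u ∉ N) ∧ G.Adj u x := by simpa using hx
    exact Finset.mem_sdiff.2
      ⟨mem_N.2 ⟨u, hus, hux⟩, fun hxs => huN (mem_N.2 ⟨x, hxs, hux.symm⟩)⟩
  calc s.card = (s \ N).card + (N ∩ s).card := by
        rw [Finset.inter_comm, Finset.card_sdiff_add_card_inter]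
    _ ≤ (N \ s).card + (N ∩ s).card :=
        Nat.add_le_add_right
          ((hG.card_le_card_biUnion_neighborFinset_of_isIndepFinset hiso hindep).trans
            (Finset.card_le_card hsub)) _
    _ = N.card := Finset.card_sdiff_add_card_inter N s

lemma WellCovered.exists_equiv_sum_adj [Finite V] (hG : WellCovered G)
    (hbip : G.IsBipartite) (hiso : ∀ v, ∃ w, G.Adj v w) :
    ∃ (m : ℕ) (e : Fin m ⊕ Fin m ≃ V), (∀ i, G.Adj (e (.inl i)) (e (.inr i))) ∧
      ∀ i j, ¬ G.Adj (e (.inl i)) (e (.inl j)) := by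
  classical
  have := Fintype.ofFinite V
  have hall (s : Set V) : s.ncard ≤ (⋃ v ∈ s, G.neighborSet v).ncard := by
    simpa [← Set.ncard_coe_finset] using hG.card_le_card_biUnion_neighborFinset hiso s.toFinset
  obtain ⟨A, B, hAB⟩ := hbip.exists_isBipartiteWith
  obtain ⟨f, hf, hadj⟩ := exists_bijective_of_forall_ncard_le hAB hall
  have hcover : A ∪ B = Set.univ := union_eq_univ_of_forall_ncard_le hAB hall
  let φ : Fin (Nat.card A) ≃ A := (Finite.equivFin A).symm
  let e : Fin (Nat.card A) ⊕ Fin (Nat.card A) ≃ V :=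
    (φ.sumCongr (φ.trans (.ofBijective f hf))).trans <|
      (Equiv.Set.union hAB.disjoint).symm.trans <|
        (Equiv.setCongr hcover).trans (Equiv.Set.univ V)
  refine ⟨Nat.card A, e, fun i => hadj (φ i), fun i j hij => ?_⟩
  exact hAB.disjoint.notMem_of_mem_left (φ j).2 (hAB.mem_of_mem_adj (φ i).2 hij)

end Matching

section Rungs

variable {ι : Type*} {G : SimpleGraph (ι ⊕ ι)}

lemma IsIndepFinset.injOn_sumElim_id (hG : ∀ i, G.Adj (.inl i) (.inr i)) {s : Finset (ι ⊕ ι)}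
    (hs : IsIndepFinset G s) : Set.InjOn (Sum.elim id id) (s : Set (ι ⊕ ι)) := by
  rintro (i | i) hi (j | j) hj (rfl : i = j)
  · rfl
  · exact absurd (hG i) (hs _ hi _ hj)
  · exact absurd (hG i) (hs _ hj _ hi)
  · rfl

lemma WellCovered.adj_of_adj_inl_of_adj_inr [Finite ι] (hw : WellCovered G)
    (hG : ∀ i, G.Adj (.inl i) (.inr i)) (hl : ∀ i j, ¬ G.Adj (.inl i) (.inl j))
    {i : ι} {x y : ι ⊕ ι} (hx : G.Adj (.inl i) x) (hy : G.Adj (.inr i) y) : G.Adj x y := by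
  classical
  have := Fintype.ofFinite ι
  by_contra hxy
  obtain ⟨s, hxys, hs, hmax⟩ := hw.exists_maximum_superset (isIndepFinset_pair hxy)
  obtain ⟨hxs, hys⟩ : x ∈ s ∧ y ∈ s := by simpa [Finset.insert_subset_iff] using hxys
  have hlt : s.card < Fintype.card ι := by
    rw [← Finset.card_image_of_injOn (hs.injOn_sumElim_id hG), Finset.card_lt_iff_ne_univ]
    intro huniv
    obtain ⟨j | j, hj, rfl⟩ := Finset.mem_image.1 (huniv ▸ Finset.mem_univ i)
    · exact hs _ hj x hxs hx
    · exact hs _ hj y hys hy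
  have hle : Fintype.card ι ≤ s.card := by
    simpa using hmax (Finset.univ.map .inl) (by simpa [IsIndepFinset] using hl)
  exact hlt.not_ge hle

end Rungs

lemma cycleGraph_four_isContained {V : Type*} {G : SimpleGraph V} {a b c d : V}
    (hab : G.Adj a b) (hbc : G.Adj b c) (hcd : G.Adj c d) (hda : G.Adj d a)
    (hac : a ≠ c) (hbd : b ≠ d) : cycleGraph 4 ⊑ G := by
  refine (cycleGraph_isContained_iff (by norm_num)).2
    ⟨a, .cons hab (.cons hbc (.cons hcd (.cons hda .nil))), ?_, rfl⟩
  simp [Walk.cons_isCycle_iff, Walk.isPath_def, hab.ne, hbc.ne, hcd.ne, hda.ne, hac, hbd,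
    hab.ne', hda.ne', hac.symm]

lemma WellCovered.adj_inl_iff_or_adj_inr_iff {ι : Type*} {G : SimpleGraph (ι ⊕ ι)} [Finite ι]
    (hw : WellCovered G) (hC : (cycleGraph 4).Free G)
    (hG : ∀ i, G.Adj (.inl i) (.inr i)) (hl : ∀ i j, ¬ G.Adj (.inl i) (.inl j)) (i : ι) :
    (∀ x, G.Adj (.inl i) x ↔ x = .inr i) ∨ (∀ x, G.Adj (.inr i) x ↔ x = .inl i) := by
  by_contra! h
  obtain ⟨⟨x, hx⟩, y, hy⟩ := h
  obtain ⟨hix, hxi⟩ : G.Adj (.inl i) x ∧ x ≠ .inr i := by grind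
  obtain ⟨hiy, hyi⟩ : G.Adj (.inr i) y ∧ y ≠ .inl i := by grind [G.adj_comm]
  exact hC <| cycleGraph_four_isContained hix (hw.adj_of_adj_inl_of_adj_inr hG hl hix hiy)
    hiy.symm (hG i).symm hyi.symm hxi

section Corona

variable {ι : Type*}

@[simp] lemma corona_adj_inl_inl {H : SimpleGraph ι} {i j : ι} :
    (corona H).Adj (.inl i) (.inl j) ↔ H.Adj i j := by
  simpa [corona, H.adj_comm j i] using H.ne_of_adj

@[simp] lemma corona_adj_inl_inr {H : SimpleGraph ι} {i j : ι} :
    (corona H).Adj (.inl i) (.inr j) ↔ i = j := by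
  simp [corona]

@[simp] lemma corona_adj_inr {H : SimpleGraph ι} {i : ι} {x : ι ⊕ ι} :
    (corona H).Adj (.inr i) x ↔ x = .inl i := by
  obtain j | j := x <;> simp [corona]

lemma eq_corona_comap_inl {G : SimpleGraph (ι ⊕ ι)} (hG : ∀ i x, G.Adj (.inr i) x ↔ x = .inl i) :
    G = corona (G.comap .inl) := by
  ext (i | i) x
  · obtain j | j := x
    · simp
    · simp [G.adj_comm (.inl i), hG]
  · simp [hG]

lemma exists_iso_corona_of_adj_iff {G : SimpleGraph (ι ⊕ ι)}
    (hG : ∀ i, (∀ x, G.Adj (.inl i) x ↔ x = .inr i) ∨ (∀ x, G.Adj (.inr i) x ↔ x = .inl i)) :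
    ∃ H : SimpleGraph ι, Nonempty (G ≃g corona H) := by
  classical
  let P (i : ι) : Prop := ∀ x, G.Adj (.inr i) x ↔ x = .inl i
  let swap : ι ⊕ ι → ι ⊕ ι := Sum.elim
    (fun i => if P i then .inl i else .inr i) (fun i => if P i then .inr i else .inl i)
  have hswap : swap.Involutive := by
    rintro (i | i) <;> by_cases hi : P i <;> simp [swap, hi]
  have hpendant (i x) : (G.comap swap).Adj (.inr i) x ↔ x = .inl i := by
    rw [← hswap.injective.eq_iff]
    by_cases hi : P i
    · simpa [swap, hi] using hi (swap x)
    · simpa [swap, hi] using (hG i).resolve_right hi (swap x)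
  refine ⟨(G.comap swap).comap .inl, ⟨?_⟩⟩
  rw [← eq_corona_comap_inl hpendant]
  exact (Iso.comap hswap.toPerm G).symm

lemma card_of_maximal_isIndepFinset_corona {H : SimpleGraph ι} {s : Finset (ι ⊕ ι)}
    (hs : Maximal (IsIndepFinset (corona H)) s) : s.card = Nat.card ι := by
  have hsurj : Sum.elim id id '' (s : Set (ι ⊕ ι)) = Set.univ := by
    refine Set.eq_univ_of_forall fun i => ?_
    by_cases hi : .inr i ∈ s
    · exact ⟨.inr i, hi, rfl⟩
    · obtain ⟨w, hw, hiw⟩ := exists_adj_of_maximal_isIndepFinset hs hi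
      exact ⟨.inl i, corona_adj_inr.1 hiw ▸ hw, rfl⟩
  calc s.card = (Sum.elim id id '' (s : Set (ι ⊕ ι))).ncard := by
        rw [(hs.prop.injOn_sumElim_id (by simp)).ncard_image, Set.ncard_coe_finset]
    _ = Nat.card ι := by rw [hsurj, Set.ncard_univ]

lemma wellCovered_corona (H : SimpleGraph ι) : WellCovered (corona H) :=
  wellCovered_iff_forall_maximal.2 fun _ _ hs ht =>
    (card_of_maximal_isIndepFinset_corona hs).trans (card_of_maximal_isIndepFinset_corona ht).symm

lemma connected_of_connected_corona {H : SimpleGraph ι} (h : (corona H).Connected) :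
    H.Connected := by
  have hstep : ∀ x y, (corona H).Adj x y →
      Relation.ReflTransGen H.Adj (Sum.elim id id x) (Sum.elim id id y) := by
    rintro (i | i) (j | j) hij
    · exact .single (corona_adj_inl_inl.1 hij)
    · exact corona_adj_inl_inr.1 hij ▸ .refl
    · exact Sum.inl_injective (corona_adj_inr.1 hij) ▸ .refl
    · simp at hij
  have : Nonempty ι := h.nonempty.map (Sum.elim id id)
  refine ⟨fun i j => ?_⟩
  have hreach := (reachable_iff_reflTransGen _ _).1 (h.preconnected (.inl i) (.inl j))
  exact (reachable_iff_reflTransGen i j).2 (hreach.lift' (Sum.elim id id) hstep)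

lemma isTree_of_isTree_corona {H : SimpleGraph ι} (h : (corona H).IsTree) : H.IsTree where
  connected := connected_of_connected_corona h.connected
  isAcyclic := h.isAcyclic.comap ⟨.inl, corona_adj_inl_inl.2⟩ Sum.inl_injective

end Corona

theorem stmt3_general {V : Type*} [Finite V] (G : SimpleGraph V) (hbip : G.IsBipartite)
    (hC : (cycleGraph 4).Free G) (hiso : ∀ v, ∃ w, G.Adj v w) :
    WellCovered G ↔ ∃ (m : ℕ) (H : SimpleGraph (Fin m)), Nonempty (G ≃g corona H) := by
  refine ⟨fun hG => ?_, fun ⟨_, H, ⟨φ⟩⟩ => (wellCovered_corona H).of_iso φ⟩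
  obtain ⟨m, e, hadj, hl⟩ := hG.exists_equiv_sum_adj hbip hiso
  let φ : G.comap e ≃g G := Iso.comap e G
  have hpendant := (hG.of_iso φ).adj_inl_iff_or_adj_inr_iff (hC.congr_right φ) hadj hl
  obtain ⟨H, ⟨ψ⟩⟩ := exists_iso_corona_of_adj_iff hpendant
  exact ⟨m, H, ⟨φ.symm.trans ψ⟩⟩

/-- A tree with at least two vertices is well-covered iff it is isomorphic to
`T'*` for some tree `T'`. -/
theorem stmt3 {V : Type*} [Fintype V] (T : SimpleGraph V) (hT : T.IsTree)
    (h2 : 2 ≤ Fintype.card V) :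
    WellCovered T ↔
      ∃ (m : ℕ) (T' : SimpleGraph (Fin m)), T'.IsTree ∧ Nonempty (T ≃g corona T') := by
  have : Nontrivial V := Fintype.one_lt_card_iff_nontrivial.1 h2
  refine (stmt3_general T hT.isBipartite (isAcyclic_iff_free_cycleGraph.1 hT.isAcyclic 4 (by simp))
    hT.connected.preconnected.exists_adj_of_nontrivial).trans (exists₂_congr fun m T' => ?_)
  exact ⟨fun ⟨φ⟩ => ⟨isTree_of_isTree_corona (φ.isTree_iff.1 hT), ⟨φ⟩⟩, And.right⟩
end
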